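/- arXiv:2211.11241 — 5 statements merged into one kernel-verified Lean document; each statement's English description precedes it below -/
import Mathlib

section
/- Let t ∈ (0,1). Then C_t has an exact overlap if and only if t is rational and, writing t = p/q in lowest terms with p, q positive integers, one has p ∉ Γ and q ∉ Γ. -/
open Filter Topology

/-- The digit set `Ω_t = {0, 3t, 3, 3t+3}`. -/
def Omega (t : ℝ) : Set ℝ := {0, 3*t, 3, 3*t+3}

/-- The projection `C_t` of the four corner Cantor set:
the set of sums `∑_{i≥1} d_i 4^{-i}` with all digits `d_i ∈ Ω_t`. -/
noncomputable def cornerC (t : ℝ) : Set ℝ :=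
  {x | ∃ d : ℕ → ℝ, (∀ i, d i ∈ Omega t) ∧ x = ∑' i : ℕ, d i / 4^(i+1)}

/-- `C_t` has an exact overlap: two distinct finite digit sequences of the same
length `k ≥ 1` with equal weighted sums. -/
def HasExactOverlap (t : ℝ) : Prop :=
  ∃ k : ℕ, 0 < k ∧ ∃ c d : Fin k → ℝ,
    (∀ n, c n ∈ Omega t) ∧ (∀ n, d n ∈ Omega t) ∧ c ≠ d ∧
    ∑ n : Fin k, c n / 4^((n : ℕ)+1) = ∑ n : Fin k, d n / 4^((n : ℕ)+1)

/-- `Γ = {(2k-1)·2^{2ℓ-1} : k, ℓ ∈ ℕ_{>0}}`. -/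
def Gamma : Set ℕ := {m | ∃ k l : ℕ, 0 < k ∧ 0 < l ∧ m = (2*k-1) * 2^(2*l-1)}

lemma eo_odd_pow {u v x y : ℕ} (hu : Odd u) (hv : Odd v) (h : u * 2 ^ x = v * 2 ^ y) : x = y := by
  have key : ∀ {u : ℕ} (x : ℕ), Odd u → padicValNat 2 (u * 2 ^ x) = x := by
    intro u x hu
    have hu0 : u ≠ 0 := by rintro rfl; simp at hu
    rw [padicValNat.mul hu0 (by positivity), padicValNat.prime_pow,
      padicValNat.eq_zero_of_not_dvd (by rwa [← even_iff_two_dvd, Nat.not_even_iff_odd]), zero_add]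
  rw [← key x hu, h, key y hv]

lemma eo_not_gamma {p q u v a b : ℕ} (hpq : Nat.Coprime p q) (hu : Odd u) (hv : Odd v)
    (h : p * (v * 4 ^ b) = q * (u * 4 ^ a)) : p ∉ Gamma := by
  rintro ⟨k, l, hk, hl, rfl⟩
  have h2 : 2 ∣ (2*k-1) * 2^(2*l-1) := Dvd.dvd.mul_left (dvd_pow_self 2 (by omega)) _
  have hq : Odd q := by
    rw [← Nat.not_even_iff_odd, even_iff_two_dvd]
    intro hq
    have := Nat.dvd_gcd h2 hq
    rw [hpq] at this
    omega
  have hk' : Odd (2*k-1) := ⟨k-1, by omega⟩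
  have := eo_odd_pow (x := 2*l-1+2*b) (y := 2*a) (hk'.mul hv) (hq.mul hu) (by
    rw [pow_add, pow_mul 2 2 b, pow_mul 2 2 a]
    norm_num
    linarith)
  omega

lemma eo_digits (k : ℕ) : ∀ α : Fin k → ℤ, (∀ n, α n = -1 ∨ α n = 0 ∨ α n = 1) →
    (∀ n, α n = 0) ∨ ∃ (u : ℤ) (a : ℕ), Odd u ∧
      (∑ n : Fin k, (α n : ℝ) / 4 ^ ((n : ℕ) + 1)) * 4 ^ k = (u : ℝ) * 4 ^ a := by
  induction k with
  | zero => intro α _; left; intro n; exact n.elim0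
  | succ k ih =>
    intro α hα
    have hs : (∑ n : Fin (k+1), (α n : ℝ) / 4 ^ ((n : ℕ) + 1)) * 4 ^ (k+1)
        = 4 * ((∑ n : Fin k, (α n.castSucc : ℝ) / 4 ^ ((n : ℕ) + 1)) * 4 ^ k) + α (Fin.last k) := by
      rw [Fin.sum_univ_castSucc]
      simp only [Fin.val_castSucc, Fin.val_last]
      field_simp
      ring
    rw [hs]
    rcases ih (fun n => α n.castSucc) (fun n => hα _) with h0 | ⟨u, a, hu, h⟩
    · simp only [h0]
      rcases hα (Fin.last k) with h | h | h
      · right; exact ⟨-1, 0, by decide, by simp [h]⟩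
      · left
        intro n
        refine Fin.lastCases h h0 n
      · right; exact ⟨1, 0, by decide, by simp [h]⟩
    · rw [h]
      right
      rcases hα (Fin.last k) with h | h | h
      · refine ⟨4 * (u * 4 ^ a) - 1, 0, ⟨2 * (u * 4 ^ a) - 1, by ring⟩, by rw [h]; push_cast; ring⟩
      · exact ⟨u, a + 1, hu, by rw [h]; push_cast; ring⟩
      · refine ⟨4 * (u * 4 ^ a) + 1, 0, ⟨2 * (u * 4 ^ a), by ring⟩, by rw [h]; push_cast; ring⟩

lemma eo_forward (t : ℝ) (ht : t ∈ Set.Ioo (0:ℝ) 1) (h : HasExactOverlap t) :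
      ∃ p q : ℕ, 0 < p ∧ 0 < q ∧ Nat.Coprime p q ∧ t = (p : ℝ) / q ∧
        p ∉ Gamma ∧ q ∉ Gamma := by
  obtain ⟨k, hk, c, d, hc, hd, hne, hsum⟩ := h
  have rep : ∀ x ∈ Omega t, ∃ a b : ℤ, (a = 0 ∨ a = 1) ∧ (b = 0 ∨ b = 1) ∧ x = 3 * (a + t * b) := by
    intro x hx
    rcases hx with rfl | rfl | rfl | hx
    · exact ⟨0, 0, by simp⟩
    · exact ⟨0, 1, by simp⟩
    · exact ⟨1, 0, by simp⟩
    · exact ⟨1, 1, by simp, by simp, by rw [Set.mem_singleton_iff.1 hx]; push_cast; ring⟩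
  choose a b ha hb hab using fun n => rep _ (hc n)
  choose a' b' ha' hb' hab' using fun n => rep _ (hd n)
  have e1 : (∑ n : Fin k, ((a n - a' n : ℤ) : ℝ) / 4 ^ ((n : ℕ) + 1)) +
      t * (∑ n : Fin k, ((b n - b' n : ℤ) : ℝ) / 4 ^ ((n : ℕ) + 1)) = 0 := by
    rw [← sub_eq_zero, ← Finset.sum_sub_distrib] at hsum
    have : ∀ n : Fin k, c n / 4 ^ ((n : ℕ) + 1) - d n / 4 ^ ((n : ℕ) + 1) =
      3 * (((a n - a' n : ℤ) : ℝ) / 4 ^ ((n : ℕ) + 1) + t * (((b n - b' n : ℤ) : ℝ) / 4 ^ ((n : ℕ) + 1))) := by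
      intro n
      rw [hab n, hab' n]; push_cast; ring
    simp only [this] at hsum
    rw [← Finset.mul_sum, Finset.sum_add_distrib, ← Finset.mul_sum] at hsum
    linarith
  have hA := eo_digits k (fun n => a n - a' n) (fun n => by
    rcases ha n with h | h <;> rcases ha' n with h' | h' <;> simp [h, h'])
  have hB := eo_digits k (fun n => b n - b' n) (fun n => by
    rcases hb n with h | h <;> rcases hb' n with h' | h' <;> simp [h, h'])
  set SA := (∑ n : Fin k, ((a n - a' n : ℤ) : ℝ) / 4 ^ ((n : ℕ) + 1)) with hSA
  set SB := (∑ n : Fin k, ((b n - b' n : ℤ) : ℝ) / 4 ^ ((n : ℕ) + 1)) with hSB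
  have h4 : (4:ℝ) ^ k ≠ 0 := by positivity
  have nz : ∀ (u : ℤ) (i : ℕ), Odd u → (u : ℝ) * 4 ^ i ≠ 0 := by
    intro u i hu
    have : u ≠ 0 := by rintro rfl; simp at hu
    have : (u : ℝ) ≠ 0 := by exact_mod_cast this
    positivity
  have ht0 : t ≠ 0 := ht.1.ne'
  rcases hA with hA | ⟨u, i, hu, hA⟩
  · exfalso
    have : SA = 0 := by rw [hSA]; simp [hA]
    rcases hB with hB | ⟨v, j, hv, hB⟩
    · apply hne
      funext n
      rw [hab n, hab' n, sub_eq_zero.1 (hA n), sub_eq_zero.1 (hB n)]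
    · have : SB = 0 := by
        rw [this, zero_add] at e1
        exact (mul_eq_zero.1 e1).resolve_left ht0
      rw [this, zero_mul] at hB
      exact nz v j hv hB.symm
  · rcases hB with hB | ⟨v, j, hv, hB⟩
    · exfalso
      have : SB = 0 := by rw [hSB]; simp [hB]
      rw [this, mul_zero, add_zero] at e1
      rw [e1, zero_mul] at hA
      exact nz u i hu hA.symm
    · have e2 : (u : ℝ) * 4 ^ i = - t * ((v:ℝ) * 4 ^ j) := by
        rw [← hA, ← hB]; linear_combination (4 ^ k) * e1
      have e3 : ((u.natAbs * 4 ^ i : ℕ) : ℝ) = t * ((v.natAbs * 4 ^ j : ℕ) : ℝ) := by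
        have := congrArg abs e2
        rw [abs_mul, abs_mul, abs_mul, abs_neg, abs_of_pos ht.1] at this
        simpa [Nat.cast_natAbs] using this
      have hu' : Odd u.natAbs := Int.natAbs_odd.2 hu
      have hv' : Odd v.natAbs := Int.natAbs_odd.2 hv
      generalize u.natAbs = U at e3 hu'
      generalize v.natAbs = V at e3 hv'
      have hm : 0 < U * 4 ^ i := by have := hu'.pos; positivity
      have hn : 0 < V * 4 ^ j := by have := hv'.pos; positivity
      obtain ⟨g, p, q, hg, hpq, hp, hq⟩ := Nat.exists_coprime' (m := U * 4 ^ i) (n := V * 4 ^ j)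
        (Nat.gcd_pos_of_pos_left _ hm)
      have hp0 : 0 < p := Nat.pos_of_ne_zero (by rintro rfl; rw [hp] at hm; simp at hm)
      have hq0 : 0 < q := Nat.pos_of_ne_zero (by rintro rfl; rw [hq] at hn; simp at hn)
      refine ⟨p, q, hp0, hq0, hpq, ?_, ?_, ?_⟩
      · rw [hp, hq] at e3
        push_cast at e3
        have hg' : (g:ℝ) ≠ 0 := by exact_mod_cast hg.ne'
        have hq' : (q:ℝ) ≠ 0 := by exact_mod_cast hq0.ne'
        rw [eq_div_iff hq']
        apply mul_right_cancel₀ hg'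
        linarith
      · exact eo_not_gamma (a := i) (b := j) hpq hu' hv' (by rw [hp, hq]; ring)
      · exact eo_not_gamma (a := j) (b := i) hpq.symm hv' hu' (by rw [hp, hq]; ring)

/-! ### Products of cosines -/

lemma eo_cos_small (n : ℕ) : ∀ x : ℝ, |x| ≤ 1/2 →
    1 - x^2 ≤ ∏ i ∈ Finset.range n, |Real.cos (x / 4 ^ i)| := by
  induction n with
  | zero => intro x _; simp; positivity
  | succ n ih =>
    intro x hx
    rw [Finset.prod_range_succ']
    have h1 := ih (x / 4) (by rw [abs_div]; norm_num; linarith [abs_nonneg x])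
    have h2 : 1 - x^2/2 ≤ |Real.cos (x / 4 ^ 0)| := by
      simpa using (Real.one_sub_sq_div_two_le_cos).trans (le_abs_self (Real.cos x))
    have h3 : ∀ i, x / 4 ^ (i+1) = x / 4 / 4 ^ i := by intro i; field_simp; ring
    simp only [h3]
    have hx2 : x^2 ≤ 1/4 := by
      rw [← sq_abs]; nlinarith [abs_nonneg x]
    calc 1 - x^2 ≤ (1 - (x/4)^2) * (1 - x^2/2) := by nlinarith [sq_nonneg x, sq_nonneg (x^2)]
      _ ≤ _ := mul_le_mul h1 h2 (by linarith) (Finset.prod_nonneg fun _ _ => abs_nonneg _)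

lemma eo_cos_bound (m : ℕ) : ∀ x : ℝ, |x| ≤ 4 ^ m / 2 → (∀ i : ℕ, Real.cos (x / 4 ^ i) ≠ 0) →
    ∃ c > 0, ∀ n : ℕ, c ≤ ∏ i ∈ Finset.range n, |Real.cos (x / 4 ^ i)| := by
  induction m with
  | zero =>
    intro x hx _
    refine ⟨3/4, by norm_num, fun n => le_trans ?_ (eo_cos_small n x (by simpa using hx))⟩
    have : |x| ≤ 1/2 := by simpa using hx
    rw [← sq_abs]; nlinarith [abs_nonneg x]
  | succ m ih =>
    intro x hx h
    have h3 : ∀ i, x / 4 ^ (i+1) = x / 4 / 4 ^ i := by intro i; field_simp; ring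
    obtain ⟨c, hc, hb⟩ := ih (x/4) (by
      rw [abs_div, pow_succ] at *; norm_num; linarith) (fun i => by rw [← h3]; exact h _)
    have h0 : 0 < |Real.cos x| := abs_pos.2 (by simpa using h 0)
    refine ⟨min 1 (c * |Real.cos x|), by positivity, fun n => ?_⟩
    cases n with
    | zero => simp
    | succ n =>
      refine (min_le_right _ _).trans ?_
      rw [Finset.prod_range_succ']
      simp only [h3]
      simpa using mul_le_mul_of_nonneg_right (hb n) h0.le

lemma eo_cos_p (p : ℕ) (hp0 : 0 < p) (hp : p ∉ Gamma) :
    ∃ c > 0, ∀ i k : ℕ, c ≤ ∏ n ∈ Finset.range k, |Real.cos (Real.pi * (p * 4 ^ i / 4 ^ (n+1)))| := by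
  have hcos : ∀ i : ℕ, Real.cos (Real.pi * p / 4 / 4 ^ i) ≠ 0 := by
    intro i h
    rw [Real.cos_eq_zero_iff] at h
    obtain ⟨m, hm⟩ := h
    have hpi := Real.pi_pos.ne'
    have e : (p : ℝ) = (2 * m + 1) * 2 ^ (2 * i + 1) := by
      rw [pow_succ 2 (2*i), pow_mul]
      norm_num
      field_simp at hm
      linarith
    have e' : (p : ℤ) = (2 * m + 1) * 2 ^ (2 * i + 1) := by exact_mod_cast e
    have hm0 : 0 < 2 * m + 1 := by
      have h1 : 0 < (2 * m + 1) * 2 ^ (2 * i + 1) := by rw [← e']; exact_mod_cast hp0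
      exact pos_of_mul_pos_left h1 (by positivity)
    obtain ⟨r, rfl⟩ := Int.eq_ofNat_of_zero_le (show 0 ≤ m by omega)
    apply hp
    refine ⟨r + 1, i + 1, by omega, by omega, ?_⟩
    have : 2 * (r + 1) - 1 = 2 * r + 1 := by omega
    rw [this]
    have : 2 * (i + 1) - 1 = 2 * i + 1 := by omega
    rw [this]
    exact_mod_cast e'
  obtain ⟨m, hm⟩ := pow_unbounded_of_one_lt (2 * |Real.pi * p / 4|) (show (1:ℝ) < 4 by norm_num)
  obtain ⟨c, hc, hb⟩ := eo_cos_bound m _ (by linarith) hcos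
  have hc1 : c ≤ 1 := by simpa using hb 0
  refine ⟨c, hc, fun i => ?_⟩
  induction i with
  | zero =>
    intro k
    refine (hb k).trans (le_of_eq ?_)
    refine Finset.prod_congr rfl fun n _ => ?_
    congr 2
    field_simp
    ring
  | succ i ih =>
    intro k
    cases k with
    | zero => simpa using hc1
    | succ k =>
      rw [Finset.prod_range_succ']
      have h1 : |Real.cos (Real.pi * (p * 4 ^ (i+1) / 4 ^ (0+1)))| = 1 := by
        have : Real.pi * (p * 4 ^ (i+1) / 4 ^ (0+1)) = ((p * 4 ^ i : ℕ) : ℝ) * Real.pi := by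
          push_cast; field_simp; ring
        rw [this, Real.cos_nat_mul_pi]; simp
      rw [h1, mul_one]
      refine (ih k).trans (le_of_eq ?_)
      refine Finset.prod_congr rfl fun n _ => ?_
      congr 2
      field_simp
      ring

/-! ### Exponentials -/

noncomputable def eoE (x : ℝ) : ℂ := Complex.exp (((2 * Real.pi * x : ℝ) : ℂ) * Complex.I)

lemma eoE_add (x y : ℝ) : eoE (x + y) = eoE x * eoE y := by
  unfold eoE; rw [← Complex.exp_add]; congr 1; push_cast; ring

lemma eoE_zero : eoE 0 = 1 := by simp [eoE]

lemma eoE_sum {ι : Type*} (s : Finset ι) (f : ι → ℝ) : eoE (∑ i ∈ s, f i) = ∏ i ∈ s, eoE (f i) := by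
  classical
  induction s using Finset.induction_on with
  | empty => simp [eoE_zero]
  | insert a s ha ih => rw [Finset.sum_insert ha, Finset.prod_insert ha, eoE_add, ih]

lemma eoE_norm (x : ℝ) : ‖eoE x‖ = 1 := Complex.norm_exp_ofReal_mul_I _

lemma eoE_conj (x : ℝ) : (starRingEnd ℂ) (eoE x) = eoE (-x) := by
  unfold eoE; rw [← Complex.exp_conj]; congr 1
  rw [map_mul, Complex.conj_ofReal, Complex.conj_I]; push_cast; ring

lemma eoE_nat_mul (n : ℕ) (x : ℝ) : eoE (n * x) = eoE x ^ n := by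
  unfold eoE; rw [← Complex.exp_nat_mul]; congr 1; push_cast; ring

lemma eoE_eq_one {x : ℝ} : eoE x = 1 ↔ ∃ n : ℤ, x = n := by
  unfold eoE
  rw [Complex.exp_eq_one_iff]
  have hpi := Real.pi_pos.ne'
  constructor
  · rintro ⟨n, hn⟩
    refine ⟨n, ?_⟩
    have h2 : ((2 * Real.pi * x : ℝ) : ℂ) = ((n * (2 * Real.pi) : ℝ) : ℂ) := by
      apply mul_right_cancel₀ Complex.I_ne_zero
      rw [hn]; push_cast; ring
    have h3 := Complex.ofReal_injective h2
    apply mul_left_cancel₀ (mul_ne_zero two_ne_zero hpi)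
    linarith
  · rintro ⟨n, rfl⟩
    exact ⟨n, by push_cast; ring⟩

lemma eoE_one_add (x : ℝ) : ‖1 + eoE x‖ = 2 * |Real.cos (Real.pi * x)| := by
  have : 1 + eoE x = eoE (x/2) * ((2 * Real.cos (Real.pi * x) : ℝ) : ℂ) := by
    have h1 : eoE x = eoE (x/2) * eoE (x/2) := by rw [← eoE_add]; congr 1; ring
    have h2 : (1:ℂ) = eoE (x/2) * eoE (-(x/2)) := by rw [← eoE_add, add_neg_cancel, eoE_zero]
    have h3 : ((2 * Real.cos (Real.pi * x) : ℝ) : ℂ) = eoE (x/2) + eoE (-(x/2)) := by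
      push_cast
      rw [Complex.two_cos]
      unfold eoE
      congr 2 <;> push_cast <;> ring
    rw [h3, mul_add, ← h1, ← h2, add_comm]
  rw [this, norm_mul, eoE_norm, one_mul, Complex.norm_real, Real.norm_eq_abs, abs_mul]
  norm_num

lemma eo_bessel (M k : ℕ) (hM : 0 < M) (e : Fin k → Fin M → ℂ)
    (h : ∀ i j, ∑ x, (starRingEnd ℂ) (e i x) * e j x = if i = j then (M : ℂ) else 0)
    (S : Finset (Fin M)) :
    ∑ i, ‖∑ x ∈ S, e i x‖ ^ 2 ≤ M * S.card := by
  classical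
  have hM' : (0:ℝ) < M := by exact_mod_cast hM
  have hsq : ((Real.sqrt M : ℝ) : ℂ) * ((Real.sqrt M : ℝ) : ℂ) = M := by
    rw [← Complex.ofReal_mul, Real.mul_self_sqrt hM'.le]; simp
  have hs0 : ((Real.sqrt M : ℝ) : ℂ) ≠ 0 := by
    exact_mod_cast (Real.sqrt_pos.2 hM').ne'
  let v : Fin k → EuclideanSpace ℂ (Fin M) := fun i =>
    WithLp.toLp 2 (fun x => e i x / (Real.sqrt M : ℝ))
  let f : EuclideanSpace ℂ (Fin M) := WithLp.toLp 2 (fun x => if x ∈ S then 1 else 0)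
  have hv : Orthonormal ℂ v := by
    rw [orthonormal_iff_ite]
    intro i j
    have : inner ℂ (v i) (v j) = (∑ x, (starRingEnd ℂ) (e i x) * e j x) / M := by
      simp only [v, PiLp.inner_apply, RCLike.inner_apply, map_div₀, Complex.conj_ofReal]
      rw [Finset.sum_div]
      refine Finset.sum_congr rfl fun x _ => ?_
      rw [← hsq]; field_simp
    rw [this, h]
    have : (M:ℂ) ≠ 0 := by exact_mod_cast hM.ne'
    split_ifs <;> simp [this]
  have hB := hv.sum_inner_products_le f (s := Finset.univ)
  have hf : ‖f‖ ^ 2 = S.card := by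
    rw [EuclideanSpace.norm_sq_eq]
    simp [f, apply_ite]
  have hi : ∀ i, ‖inner ℂ (v i) f‖ ^ 2 = ‖∑ x ∈ S, e i x‖ ^ 2 / M := by
    intro i
    have : inner ℂ (v i) f = (starRingEnd ℂ) ((∑ x ∈ S, e i x) / (Real.sqrt M : ℝ)) := by
      simp only [v, f, PiLp.inner_apply, RCLike.inner_apply]
      simp [Finset.sum_div]
    rw [this, RCLike.norm_conj, norm_div, div_pow, Complex.norm_real, Real.norm_eq_abs, sq_abs,
      Real.sq_sqrt hM'.le]
  rw [hf] at hB
  simp only [hi] at hB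
  rw [← Finset.sum_div, div_le_iff₀ hM'] at hB
  linarith

/-! ### Digit sums -/

def eoS (k : ℕ) (A : Finset (Fin k)) : ℕ := ∑ n ∈ A, 4 ^ (k - 1 - (n : ℕ))

lemma eoS_real (k : ℕ) (A : Finset (Fin k)) :
    (eoS k A : ℝ) / 4 ^ k = ∑ n ∈ A, 1 / 4 ^ ((n : ℕ) + 1) := by
  unfold eoS
  push_cast
  rw [Finset.sum_div]
  refine Finset.sum_congr rfl fun n _ => ?_
  have : (4:ℝ) ^ k = 4 ^ (k - 1 - (n:ℕ)) * 4 ^ ((n:ℕ) + 1) := by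
    rw [← pow_add]; congr 1; omega
  rw [this]; field_simp

lemma eoS_lt (k : ℕ) (A : Finset (Fin k)) : eoS k A < 4 ^ k := by
  have h1 : eoS k A ≤ ∑ n : Fin k, 4 ^ (k - 1 - (n : ℕ)) :=
    Finset.sum_le_sum_of_subset (Finset.subset_univ _)
  rw [Fin.sum_univ_eq_sum_range (fun n => 4 ^ (k - 1 - n)) k,
    Finset.sum_range_reflect (fun n => 4 ^ n) k] at h1
  exact h1.trans_lt (Nat.geomSum_lt (by norm_num) (by simp))

lemma eo_sum_norm (k p i : ℕ) :
    ‖∑ A : Finset (Fin k), eoE ((p * eoS k A : ℕ) * (4 ^ i / 4 ^ k))‖ =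
      2 ^ k * ∏ n ∈ Finset.range k, |Real.cos (Real.pi * (p * 4 ^ i / 4 ^ (n+1)))| := by
  have h1 : ∀ A : Finset (Fin k), eoE ((p * eoS k A : ℕ) * (4 ^ i / 4 ^ k)) =
      ∏ n ∈ A, eoE (p * 4 ^ i / 4 ^ ((n:ℕ)+1)) := by
    intro A
    rw [← eoE_sum]
    congr 1
    push_cast
    have := eoS_real k A
    calc (p:ℝ) * (eoS k A) * (4 ^ i / 4 ^ k) = p * 4 ^ i * (eoS k A / 4 ^ k) := by ring
      _ = _ := by
        rw [this, Finset.mul_sum]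
        exact Finset.sum_congr rfl fun n _ => by ring
  simp only [h1]
  rw [← Finset.powerset_univ, ← Finset.prod_one_add, norm_prod]
  simp only [eoE_one_add]
  rw [Finset.prod_mul_distrib]
  simp only [Finset.prod_const, Finset.card_univ, Fintype.card_fin]
  rw [Fin.prod_univ_eq_prod_range (fun n => |Real.cos (Real.pi * (p * 4 ^ i / 4 ^ (n+1)))|)]

lemma eo_orth (K k : ℕ) (i j : Fin k) :
    ∑ x : Fin (K * 4 ^ k), (starRingEnd ℂ) (eoE ((x:ℕ) * (4 ^ (i:ℕ) / 4 ^ k))) *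
      eoE ((x:ℕ) * (4 ^ (j:ℕ) / 4 ^ k)) = if i = j then ((K * 4 ^ k : ℕ) : ℂ) else 0 := by
  have h1 : ∀ x : ℕ, (starRingEnd ℂ) (eoE (x * (4 ^ (i:ℕ) / 4 ^ k))) *
      eoE (x * (4 ^ (j:ℕ) / 4 ^ k)) = eoE (((4:ℝ) ^ (j:ℕ) - 4 ^ (i:ℕ)) / 4 ^ k) ^ x := by
    intro x
    rw [eoE_conj, ← eoE_add, ← eoE_nat_mul]; congr 1; ring
  simp only [h1]
  split_ifs with hij
  · subst hij
    simp [eoE_zero]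
  · rw [Fin.sum_univ_eq_sum_range (fun x => eoE (((4:ℝ) ^ (j:ℕ) - 4 ^ (i:ℕ)) / 4 ^ k) ^ x)]
    have hne : eoE (((4:ℝ) ^ (j:ℕ) - 4 ^ (i:ℕ)) / 4 ^ k) ≠ 1 := by
      intro h
      obtain ⟨n, hn⟩ := eoE_eq_one.1 h
      rw [div_eq_iff (by positivity)] at hn
      have hn' : (4:ℤ) ^ (j:ℕ) - 4 ^ (i:ℕ) = n * 4 ^ k := by exact_mod_cast hn
      have hi : (4:ℤ) ^ (i:ℕ) < 4 ^ k := pow_lt_pow_right₀ (by norm_num) i.2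
      have hj : (4:ℤ) ^ (j:ℕ) < 4 ^ k := pow_lt_pow_right₀ (by norm_num) j.2
      have hi0 : (0:ℤ) < 4 ^ (i:ℕ) := by positivity
      have hj0 : (0:ℤ) < 4 ^ (j:ℕ) := by positivity
      have h0 := Int.eq_zero_of_abs_lt_dvd (m := 4 ^ k) (x := (4:ℤ) ^ (j:ℕ) - 4 ^ (i:ℕ))
        ⟨n, by rw [hn']; ring⟩ (by rw [abs_lt]; constructor <;> linarith)
      have h1 : (4:ℤ) ^ (j:ℕ) = 4 ^ (i:ℕ) := by linarith
      have h2 := pow_right_injective₀ (show (0:ℤ) < 4 by norm_num) (by norm_num) h1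
      exact hij (Fin.ext h2.symm)
    rw [geom_sum_eq hne, ← eoE_nat_mul, eoE_eq_one.2, sub_self, zero_div]
    refine ⟨K * (4 ^ (j:ℕ) - 4 ^ (i:ℕ)), ?_⟩
    push_cast
    field_simp

lemma eo_noninj (p q : ℕ) (hp0 : 0 < p) (hq0 : 0 < q) (hp : p ∉ Gamma) (hq : q ∉ Gamma) :
    ∃ k : ℕ, ¬ Function.Injective (fun AB : Finset (Fin k) × Finset (Fin k) =>
      p * eoS k AB.1 + q * eoS k AB.2) := by
  classical
  by_contra hcon
  push Not at hcon
  obtain ⟨c, hc, hcb⟩ := eo_cos_p p hp0 hp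
  obtain ⟨d, hd, hdb⟩ := eo_cos_p q hq0 hq
  have main : ∀ k : ℕ, (k:ℝ) * (c * d) ^ 2 ≤ (p + q : ℕ) := by
    intro k
    have hinj := hcon k
    have hlt : ∀ AB : Finset (Fin k) × Finset (Fin k),
        p * eoS k AB.1 + q * eoS k AB.2 < (p + q) * 4 ^ k := by
      intro AB
      have h1 := Nat.mul_lt_mul_of_pos_left (eoS_lt k AB.1) hp0
      have h2 := Nat.mul_lt_mul_of_pos_left (eoS_lt k AB.2) hq0
      linarith
    let F : Finset (Fin k) × Finset (Fin k) ↪ Fin ((p + q) * 4 ^ k) :=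
      ⟨fun AB => ⟨_, hlt AB⟩, fun x y h => hinj (by simpa using h)⟩
    have hB := eo_bessel ((p+q) * 4 ^ k) k (by positivity)
      (fun i x => eoE ((x:ℕ) * (4 ^ (i:ℕ) / 4 ^ k))) (eo_orth (p+q) k) (Finset.univ.map F)
    have hcard : ((Finset.univ.map F).card : ℝ) = 4 ^ k := by
      rw [Finset.card_map, Finset.card_univ, Fintype.card_prod, Fintype.card_finset,
        Fintype.card_fin]
      push_cast
      rw [← mul_pow]; norm_num
    have hterm : ∀ i : Fin k, (4 ^ k * (c * d)) ^ 2 ≤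
        ‖∑ x ∈ Finset.univ.map F, eoE ((x:ℕ) * (4 ^ (i:ℕ) / 4 ^ k))‖ ^ 2 := by
      intro i
      have e1 : ∑ x ∈ Finset.univ.map F, eoE ((x:ℕ) * (4 ^ (i:ℕ) / 4 ^ k)) =
          (∑ A : Finset (Fin k), eoE ((p * eoS k A : ℕ) * (4 ^ (i:ℕ) / 4 ^ k))) *
          (∑ A : Finset (Fin k), eoE ((q * eoS k A : ℕ) * (4 ^ (i:ℕ) / 4 ^ k))) := by
        rw [Finset.sum_map, Finset.sum_mul_sum, Fintype.sum_prod_type]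
        refine Finset.sum_congr rfl fun A _ => Finset.sum_congr rfl fun B _ => ?_
        rw [← eoE_add]
        congr 1
        have hF : ((F (A, B) : Fin _) : ℕ) = p * eoS k A + q * eoS k B := rfl
        rw [hF]
        push_cast
        ring
      rw [e1, norm_mul, eo_sum_norm, eo_sum_norm]
      refine pow_le_pow_left₀ (by positivity) ?_ 2
      have h4 : (4:ℝ) ^ k = 2 ^ k * 2 ^ k := by rw [← mul_pow]; norm_num
      calc (4:ℝ) ^ k * (c * d) = (2 ^ k * c) * (2 ^ k * d) := by rw [h4]; ring
        _ ≤ _ := by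
          gcongr
          · exact hcb i k
          · exact hdb i k
    have hsum := Finset.sum_le_sum fun i (_ : i ∈ Finset.univ) => hterm i
    have := hsum.trans hB
    rw [hcard] at this
    simp only [Finset.sum_const, Finset.card_univ, Fintype.card_fin, nsmul_eq_mul] at this
    push_cast at this ⊢
    have h16 : (0:ℝ) < 4 ^ k * 4 ^ k := by positivity
    refine le_of_mul_le_mul_right ?_ h16
    calc _ = (k:ℝ) * (4 ^ k * (c * d)) ^ 2 := by ring
      _ ≤ _ := this
      _ = _ := by ring
  have hpos : 0 < (c * d) ^ 2 := by positivity
  obtain ⟨k, hk⟩ := exists_nat_gt (((p + q : ℕ) : ℝ) / (c * d) ^ 2)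
  rw [div_lt_iff₀ hpos] at hk
  linarith [main k]

lemma eo_backward (t : ℝ) (ht : t ∈ Set.Ioo (0:ℝ) 1) (p q : ℕ) (hp0 : 0 < p) (hq0 : 0 < q)
    (htp : t = (p : ℝ) / q) (hp : p ∉ Gamma) (hq : q ∉ Gamma) : HasExactOverlap t := by
  classical
  obtain ⟨k, hk⟩ := eo_noninj p q hp0 hq0 hp hq
  rw [Function.not_injective_iff] at hk
  obtain ⟨⟨A, B⟩, ⟨A', B'⟩, heq, hne⟩ := hk
  simp only at heq
  let D : Finset (Fin k) → Finset (Fin k) → Fin k → ℝ := fun A B n =>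
    (if n ∈ A then 3 * t else 0) + (if n ∈ B then 3 else 0)
  have hD : ∀ A B n, D A B n ∈ Omega t := by
    intro A B n
    simp only [D, Omega]
    split_ifs <;> simp
  have hsum : ∀ A B, ∑ n, D A B n / 4 ^ ((n:ℕ) + 1) =
      3 / (q * 4 ^ k) * ((p * eoS k A + q * eoS k B : ℕ) : ℝ) := by
    intro A B
    have h1 : ∀ n, D A B n / 4 ^ ((n:ℕ) + 1) = 3 * t * (if n ∈ A then 1 / 4 ^ ((n:ℕ)+1) else 0) +
        3 * (if n ∈ B then 1 / 4 ^ ((n:ℕ)+1) else 0) := by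
      intro n
      simp only [D]
      split_ifs <;> ring
    simp only [h1]
    rw [Finset.sum_add_distrib, ← Finset.mul_sum, ← Finset.mul_sum, Finset.sum_ite_mem,
      Finset.sum_ite_mem, Finset.univ_inter, Finset.univ_inter, ← eoS_real, ← eoS_real, htp]
    have : (q:ℝ) ≠ 0 := by exact_mod_cast hq0.ne'
    push_cast
    field_simp
  refine ⟨k, ?_, D A B, D A' B', hD A B, hD A' B', ?_, ?_⟩
  · rcases Nat.eq_zero_or_pos k with rfl | h
    · exact absurd (Subsingleton.elim _ _) hne
    · exact h
  · intro h
    apply hne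
    have key : ∀ n, (n ∈ A ↔ n ∈ A') ∧ (n ∈ B ↔ n ∈ B') := by
      intro n
      have hn := congrFun h n
      have h0 := ht.1
      have h1 := ht.2
      simp only [D] at hn
      by_cases a1 : n ∈ A <;> by_cases a2 : n ∈ A' <;> by_cases a3 : n ∈ B <;>
        by_cases a4 : n ∈ B' <;> simp only [a1, a2, a3, a4, if_true, if_false] at hn ⊢ <;>
        first | (exact ⟨Iff.rfl, Iff.rfl⟩) | (exact ⟨trivial, trivial⟩) | (simp; done) | (exfalso; linarith)
    rw [Prod.mk.injEq]
    exact ⟨Finset.ext fun n => (key n).1, Finset.ext fun n => (key n).2⟩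
  · rw [hsum, hsum, heq]

theorem exact_overlap_iff (t : ℝ) (ht : t ∈ Set.Ioo (0:ℝ) 1) :
    HasExactOverlap t ↔
      ∃ p q : ℕ, 0 < p ∧ 0 < q ∧ Nat.Coprime p q ∧ t = (p : ℝ) / q ∧
        p ∉ Gamma ∧ q ∉ Gamma := by
  constructor
  · exact eo_forward t ht
  · rintro ⟨p, q, hp0, hq0, -, htp, hp, hq⟩
    exact eo_backward t ht p q hp0 hq0 htp hp hq
end

section
/- The limit as N → ∞ of #(W ∩ [1,N]²)/N² exists and equals 5/(3π²); that is, the number of pairs (p,q) ∈ W with 1 ≤ p ≤ N and 1 ≤ q ≤ N, divided by N², tends to 5/(3π²). -/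
open Filter Topology

/-- `W = {(p,q) ∈ ℕ² : p ∉ Γ, q ∉ Γ, p < q, p and q coprime}`. -/
def W : Set (ℕ × ℕ) :=
  {pq | pq.1 ∉ Gamma ∧ pq.2 ∉ Gamma ∧ pq.1 < pq.2 ∧ Nat.Coprime pq.1 pq.2}

open scoped Classical in
noncomputable def chiG (n : ℕ) : ℝ := if n ∈ Gamma then 0 else 1

lemma mem_Gamma_iff (n : ℕ) : n ∈ Gamma ↔ n ≠ 0 ∧ Odd (padicValNat 2 n) := by
  constructor
  · rintro ⟨k, l, hk, hl, rfl⟩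
    have h1 : 2 * k - 1 ≠ 0 := by omega
    refine ⟨by positivity, ?_⟩
    rw [padicValNat.mul h1 (by positivity), padicValNat.prime_pow,
      padicValNat.eq_zero_of_not_dvd (by omega)]
    exact ⟨l - 1, by omega⟩
  · rintro ⟨h0, c, hc⟩
    obtain ⟨m, hm⟩ := (pow_padicValNat_dvd : 2 ^ padicValNat 2 n ∣ n)
    have hodd : ¬ 2 ∣ m := by
      rintro ⟨r, rfl⟩
      apply pow_succ_padicValNat_not_dvd (p := 2) h0
      exact ⟨r, by rw [pow_succ]; linarith⟩
    refine ⟨(m + 1) / 2, c + 1, by omega, by omega, ?_⟩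
    have e1 : 2 * ((m + 1) / 2) - 1 = m := by omega
    have e2 : 2 * (c + 1) - 1 = padicValNat 2 n := by omega
    rw [e1, e2, mul_comm]; exact hm

lemma chiG_odd_mul {d : ℕ} (hd : Odd d) (n : ℕ) : chiG (d * n) = chiG n := by
  have : d * n ∈ Gamma ↔ n ∈ Gamma := by
    rw [mem_Gamma_iff, mem_Gamma_iff]
    have hd0 : d ≠ 0 := by rintro rfl; simp at hd
    by_cases hn : n = 0
    · simp [hn]
    · rw [padicValNat.mul hd0 hn, padicValNat.eq_zero_of_not_dvd (by rcases hd with ⟨k, rfl⟩; omega)]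
      simp [hd0, hn]
  by_cases h : n ∈ Gamma <;> simp [chiG, this, h]

lemma chiG_two_mul {n : ℕ} (hn : n ≠ 0) : chiG (2 * n) = 1 - chiG n := by
  have : 2 * n ∈ Gamma ↔ n ∉ Gamma := by
    rw [mem_Gamma_iff, mem_Gamma_iff]
    rw [padicValNat.mul two_ne_zero hn, padicValNat.self (by norm_num)]
    simp [hn, Nat.odd_add, add_comm 1]
  by_cases h : n ∈ Gamma <;> simp [chiG, this, h]

lemma chiG_odd {n : ℕ} (hn : Odd n) : chiG n = 1 := by
  have : n ∉ Gamma := by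
    rw [mem_Gamma_iff, padicValNat.eq_zero_of_not_dvd (by rcases hn with ⟨k, rfl⟩; omega)]
    simp
  simp [chiG, this]

lemma chiG_nonneg (n : ℕ) : 0 ≤ chiG n := by unfold chiG; split_ifs <;> norm_num
lemma chiG_le_one (n : ℕ) : chiG n ≤ 1 := by unfold chiG; split_ifs <;> norm_num

noncomputable def cntB (M : ℕ) : ℝ := ∑ i ∈ Finset.range M, chiG (i + 1)

lemma cntB_two_mul (k : ℕ) : cntB (2 * k) + cntB k = 2 * k := by
  induction k with
  | zero => simp [cntB]
  | succ k ih =>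
    have e : 2 * (k + 1) = 2 * k + 1 + 1 := by ring
    unfold cntB at *
    rw [e, Finset.sum_range_succ, Finset.sum_range_succ, Finset.sum_range_succ, ← e,
      chiG_two_mul (by omega), chiG_odd ⟨k, rfl⟩]
    push_cast; linarith

lemma cntB_two_mul_add (k : ℕ) : cntB (2 * k + 1) + cntB k = 2 * k + 1 := by
  have := cntB_two_mul k
  unfold cntB at *
  rw [Finset.sum_range_succ, chiG_odd ⟨k, rfl⟩]; linarith

lemma cntB_err (M : ℕ) : (cntB M - 2 / 3 * M) ^ 2 ≤ M := by
  induction M using Nat.strong_induction_on with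
  | _ M ih =>
    rcases Nat.even_or_odd' M with ⟨k, rfl | rfl⟩
    · rcases Nat.eq_zero_or_pos k with rfl | hk
      · simp [cntB]
      · have h := ih k (by omega)
        have h2 := cntB_two_mul k
        have e : cntB (2 * k) - 2 / 3 * (2 * k : ℕ) = - (cntB k - 2 / 3 * k) := by
          push_cast; linarith
        rw [e]; push_cast; nlinarith
    · rcases Nat.eq_zero_or_pos k with rfl | hk
      · have := cntB_two_mul_add 0
        simp [cntB, chiG_odd] at *; norm_num
      · have h := ih k (by omega)
        have h2 := cntB_two_mul_add k
        have e : cntB (2 * k + 1) - 2 / 3 * (2 * k + 1 : ℕ) = 1 / 3 - (cntB k - 2 / 3 * k) := by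
          push_cast; linarith
        have hk' : (1 : ℝ) ≤ k := by exact_mod_cast hk
        rw [e]; push_cast
        nlinarith [sq_nonneg (cntB k - 2 / 3 * k + 1)]

lemma cntB_tendsto : Tendsto (fun M : ℕ => cntB M / M) atTop (𝓝 (2 / 3)) := by
  rw [tendsto_iff_norm_sub_tendsto_zero]
  have h1 : Tendsto (fun M : ℕ => Real.sqrt (1 / (M : ℝ))) atTop (𝓝 0) := by
    have := (Real.continuous_sqrt.tendsto 0).comp (tendsto_one_div_atTop_nhds_zero_nat (𝕜 := ℝ))
    rw [Real.sqrt_zero] at this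
    exact this
  refine squeeze_zero' (Eventually.of_forall fun _ => norm_nonneg _) ?_ h1
  filter_upwards [eventually_gt_atTop 0] with M hM
  have hM' : (0 : ℝ) < M := by exact_mod_cast hM
  apply Real.le_sqrt_of_sq_le
  rw [Real.norm_eq_abs, sq_abs]
  have e : cntB M / M - 2 / 3 = (cntB M - 2 / 3 * M) / M := by field_simp
  rw [e, div_pow, div_le_div_iff₀ (by positivity) hM']
  nlinarith [cntB_err M]

lemma floor_tendsto {d : ℕ} (hd : 0 < d) :
    Tendsto (fun N : ℕ => ((N / d : ℕ) : ℝ) / N) atTop (𝓝 (1 / d)) := by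
  have := (tendsto_nat_floor_mul_div_atTop (R := ℝ) (a := 1 / d) (by positivity)).comp
    (tendsto_natCast_atTop_atTop (R := ℝ))
  refine this.congr fun N => ?_
  simp only [Function.comp]
  rw [one_div_mul_eq_div, Nat.floor_div_eq_div]

noncomputable def cntA (d N : ℕ) : ℝ := ∑ i ∈ Finset.range N, if d ∣ i + 1 then chiG (i + 1) else 0

lemma cntA_eq {d : ℕ} (N : ℕ) :
    cntA d N = ∑ i ∈ Finset.range (N / d), chiG (d * (i + 1)) := by
  induction N with
  | zero => simp [cntA]
  | succ N ih =>
    unfold cntA at *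
    rw [Finset.sum_range_succ, ih, Nat.succ_div]
    split_ifs with h
    · rw [Finset.sum_range_succ]
      congr 2
      have := Nat.succ_div (a := N) (b := d)
      rw [if_pos h] at this
      rw [← this, Nat.mul_div_cancel' h]
    · simp

lemma cntA_nonneg (d N : ℕ) : 0 ≤ cntA d N := by
  rw [cntA_eq]; exact Finset.sum_nonneg fun _ _ => chiG_nonneg _

lemma cntA_le (d N : ℕ) : cntA d N ≤ N / d := by
  rw [cntA_eq]
  calc _ ≤ ∑ i ∈ Finset.range (N / d), (1 : ℝ) := Finset.sum_le_sum fun _ _ => chiG_le_one _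
    _ = ((N / d : ℕ) : ℝ) := by simp
    _ ≤ _ := Nat.cast_div_le

lemma cntA_tendsto_odd {d : ℕ} (hd : Odd d) :
    Tendsto (fun N : ℕ => cntA d N / N) atTop (𝓝 (2 / 3 * (1 / d))) := by
  have hd0 : 0 < d := hd.pos
  have h := (cntB_tendsto.comp (Nat.tendsto_div_const_atTop hd0.ne')).mul (floor_tendsto hd0)
  refine h.congr' ?_
  filter_upwards [eventually_ge_atTop d] with N hN
  have : (0 : ℝ) < ((N / d : ℕ) : ℝ) := by exact_mod_cast Nat.div_pos hN hd0
  simp only [Function.comp]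
  rw [cntA_eq]
  simp_rw [chiG_odd_mul hd]
  unfold cntB
  field_simp

lemma cntA_tendsto_even {d : ℕ} (hd : Odd d) :
    Tendsto (fun N : ℕ => cntA (2 * d) N / N) atTop (𝓝 (1 / 3 * (1 / (2 * d : ℕ)))) := by
  have hd0 : 0 < 2 * d := by have := hd.pos; omega
  have h0 : Tendsto (fun M : ℕ => 1 - cntB M / M) atTop (𝓝 (1 / 3)) := by
    have := cntB_tendsto.const_sub 1
    norm_num at this ⊢; exact this
  have h := (h0.comp (Nat.tendsto_div_const_atTop hd0.ne')).mul (floor_tendsto hd0)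
  refine h.congr' ?_
  filter_upwards [eventually_ge_atTop (2 * d)] with N hN
  have : (0 : ℝ) < ((N / (2 * d) : ℕ) : ℝ) := by exact_mod_cast Nat.div_pos hN hd0
  simp only [Function.comp]
  rw [cntA_eq]
  have e : ∀ i, chiG (2 * d * (i + 1)) = 1 - chiG (i + 1) := fun i => by
    rw [mul_assoc, chiG_two_mul (by have := hd.pos; positivity), chiG_odd_mul hd]
  simp_rw [e]
  rw [Finset.sum_sub_distrib]
  simp only [Finset.sum_const, Finset.card_range, nsmul_eq_mul, mul_one]
  unfold cntB
  field_simp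

open ArithmeticFunction in
lemma hasSum_moebius : HasSum (fun n : ℕ => (moebius n : ℝ) / (n : ℝ) ^ 2) (6 / Real.pi ^ 2) := by
  have h2 : 1 < (2 : ℂ).re := by norm_num
  have hs := (LSeriesSummable_moebius_iff.mpr h2).LSeriesHasSum
  have hv := LSeries_zeta_mul_Lseries_moebius h2
  rw [LSeries_zeta_eq_riemannZeta h2, riemannZeta_two] at hv
  have hpi : (Real.pi : ℂ) ≠ 0 := by exact_mod_cast Real.pi_ne_zero
  have hv' : LSeries (fun n => (moebius n : ℂ)) 2 = ((6 / Real.pi ^ 2 : ℝ) : ℂ) := by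
    push_cast
    field_simp at hv ⊢
    linear_combination hv
  rw [hv'] at hs
  unfold LSeriesHasSum at hs
  rw [← Complex.hasSum_ofReal]
  refine hs.congr_fun ?_ 
  intro n
  rcases eq_or_ne n 0 with rfl | hn
  · simp
  · rw [LSeries.term_of_ne_zero hn]
    push_cast
    congr 1
    norm_cast

open ArithmeticFunction in
lemma hasSum_lim : HasSum (fun n : ℕ => (moebius n : ℝ) / (n : ℝ) ^ 2 * (if Odd n then 4 / 9 else 1 / 9))
    (10 / (3 * Real.pi ^ 2)) := by
  set f : ℕ → ℝ := fun n => (moebius n : ℝ) / (n : ℝ) ^ 2 with hf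
  have hS : HasSum f (6 / Real.pi ^ 2) := hasSum_moebius
  have hO := (hS.summable.indicator {n | Odd n}).hasSum
  set O := ∑' n, Set.indicator {n | Odd n} f n
  have hE : HasSum (Set.indicator {n | ¬ Odd n} f) (-(1 / 4) * O) := by
    have hinj : Function.Injective (fun k : ℕ => 2 * k) := fun a b h => by simpa using h
    rw [← hinj.hasSum_iff]
    · refine (hO.mul_left (-(1 / 4))).congr_fun ?_
      intro k
      simp only [Function.comp, Set.indicator, Set.mem_ofPred_eq]
      rw [if_pos (by simp)]
      by_cases hk : Odd k
      · rw [if_pos hk]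
        simp only [hf]
        rw [isMultiplicative_moebius.map_mul_of_coprime (by simpa using hk),
          moebius_apply_prime Nat.prime_two]
        push_cast
        have : (k : ℝ) ≠ 0 := by exact_mod_cast hk.pos.ne'
        field_simp
        try norm_num
      · rw [if_neg hk]
        have : moebius (2 * k) = 0 := by
          apply moebius_eq_zero_of_not_squarefree
          rw [Nat.not_odd_iff_even] at hk
          obtain ⟨r, rfl⟩ := hk
          intro h
          have := h 2 ⟨r, by ring⟩
          simp at this
        simp [hf, this]
    · intro x hx
      apply Set.indicator_of_notMem
      simp only [Set.mem_ofPred_eq, not_not]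
      by_contra h
      rw [Nat.not_odd_iff_even] at h
      obtain ⟨r, rfl⟩ := h
      exact hx ⟨r, by simp; ring⟩
  have hOv : O = 8 / Real.pi ^ 2 := by
    have h := hO.add hE
    have h' : HasSum f (O + -(1 / 4) * O) := by
      refine h.congr_fun fun n => ?_
      by_cases hn : Odd n <;> simp [Set.indicator, hn]
    have := hS.unique h'
    have hpi := Real.pi_ne_zero
    field_simp at this ⊢
    linarith
  have h := (hO.mul_right (4 / 9)).add (hE.mul_right (1 / 9))
  have e : O * (4 / 9) + -(1 / 4) * O * (1 / 9) = 10 / (3 * Real.pi ^ 2) := by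
    rw [hOv]; have hpi := Real.pi_ne_zero; field_simp; norm_num
  rw [e] at h
  refine h.congr_fun fun n => ?_
  by_cases hn : Odd n <;> simp [Set.indicator, hn, hf]

open ArithmeticFunction in
lemma moebius_coprime {a b N : ℕ} (ha : 0 < a) (haN : a ≤ N) :
    ∑ d ∈ Finset.range (N + 1), (moebius d : ℝ) * ((if d ∣ a then 1 else 0) * (if d ∣ b then 1 else 0))
      = if Nat.Coprime a b then 1 else 0 := by
  have h := congrArg (fun f : ArithmeticFunction ℝ => f (Nat.gcd a b)) (coe_moebius_mul_coe_zeta (R := ℝ))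
  simp only [coe_mul_zeta_apply, one_apply] at h
  have hg : 0 < Nat.gcd a b := Nat.gcd_pos_of_pos_left _ ha
  simp only [Nat.coprime_iff_gcd_eq_one, ← h]
  rw [← Finset.sum_subset (s₁ := (Nat.gcd a b).divisors)]
  · refine Finset.sum_congr rfl fun d hd => ?_
    have hd' := Nat.dvd_of_mem_divisors hd
    rw [Nat.dvd_gcd_iff] at hd'
    simp [hd'.1, hd'.2]
  · intro d hd
    have hd' := Nat.dvd_of_mem_divisors hd
    rw [Nat.dvd_gcd_iff] at hd'
    have := Nat.le_of_dvd ha hd'.1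
    simp; omega
  · intro d _ hd
    simp only [Nat.mem_divisors, Nat.dvd_gcd_iff] at hd
    have : ¬ (d ∣ a ∧ d ∣ b) := fun h => hd ⟨h, hg.ne'⟩
    by_cases h1 : d ∣ a <;> by_cases h2 : d ∣ b <;> simp_all

noncomputable def cntT (N : ℕ) : ℝ := ∑ i ∈ Finset.range N, ∑ j ∈ Finset.range N,
  chiG (i + 1) * chiG (j + 1) * (if Nat.Coprime (i + 1) (j + 1) then 1 else 0)

open ArithmeticFunction in
lemma cntT_eq (N : ℕ) : cntT N = ∑' d : ℕ, (moebius d : ℝ) * cntA d N ^ 2 := by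
  rw [tsum_eq_sum (s := Finset.range (N + 1))]
  · unfold cntT
    have : ∀ d, (moebius d : ℝ) * cntA d N ^ 2 = ∑ i ∈ Finset.range N, ∑ j ∈ Finset.range N,
        chiG (i + 1) * chiG (j + 1) * ((moebius d : ℝ) *
          ((if d ∣ i + 1 then 1 else 0) * (if d ∣ j + 1 then 1 else 0))) := by
      intro d
      unfold cntA
      rw [sq, Finset.sum_mul_sum, Finset.mul_sum]
      refine Finset.sum_congr rfl fun i _ => ?_
      rw [Finset.mul_sum]
      refine Finset.sum_congr rfl fun j _ => ?_
      split_ifs <;> ring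
    simp_rw [this]
    rw [Finset.sum_comm (s := Finset.range (N + 1))]
    refine Finset.sum_congr rfl fun i hi => ?_
    rw [Finset.sum_comm (s := Finset.range (N + 1))]
    refine Finset.sum_congr rfl fun j _ => ?_
    rw [← Finset.mul_sum, moebius_coprime (by omega) (by simpa using hi)]
  · intro d hd
    have : cntA d N = 0 := by
      rw [cntA_eq, Nat.div_eq_of_lt (by simp at hd; omega)]; simp
    simp [this]

open ArithmeticFunction in
lemma cntT_tendsto : Tendsto (fun N : ℕ => cntT N / (N : ℝ) ^ 2) atTop
    (𝓝 (10 / (3 * Real.pi ^ 2))) := by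
  have e : ∀ N : ℕ, cntT N / (N : ℝ) ^ 2 = ∑' d : ℕ, (moebius d : ℝ) * (cntA d N / N) ^ 2 := by
    intro N
    rw [cntT_eq, ← tsum_div_const]
    congr 1; ext d; rw [div_pow]; ring
  simp_rw [e]
  rw [← hasSum_lim.tsum_eq]
  refine tendsto_tsum_of_dominated_convergence (bound := fun d : ℕ => 1 / (d : ℝ) ^ 2)
    (Real.summable_one_div_nat_pow.mpr (by norm_num)) ?_ ?_
  · intro d
    by_cases hd : Squarefree d
    · rcases Nat.even_or_odd d with h | h
      · obtain ⟨r, rfl⟩ := h.two_dvd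
        have hr : Odd r := by
          by_contra h'
          rw [Nat.not_odd_iff_even] at h'
          obtain ⟨s, rfl⟩ := h'
          have := hd 2 ⟨s, by ring⟩
          simp at this
        have := ((cntA_tendsto_even hr).pow 2).const_mul (moebius (2 * r) : ℝ)
        rw [if_neg (by simp)]
        convert this using 2
        ring
      · have := ((cntA_tendsto_odd h).pow 2).const_mul (moebius d : ℝ)
        rw [if_pos h]
        convert this using 2
        ring
    · simp [moebius_eq_zero_of_not_squarefree hd]
  · filter_upwards [eventually_gt_atTop 0] with N hN d
    have hN' : (0 : ℝ) < N := by exact_mod_cast hN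
    have h1 : |(moebius d : ℝ)| ≤ 1 := by exact_mod_cast abs_moebius_le_one (n := d)
    have h2 : cntA d N / N ≤ 1 / d := by
      rw [div_le_iff₀ hN']
      have := cntA_le d N
      rwa [one_div_mul_eq_div]
    have h3 : 0 ≤ cntA d N / N := div_nonneg (cntA_nonneg _ _) hN'.le
    rw [norm_mul, Real.norm_eq_abs, Real.norm_eq_abs, abs_of_nonneg (sq_nonneg (cntA d N / N))]
    calc _ ≤ 1 * (1 / (d : ℝ)) ^ 2 := by gcongr
      _ = _ := by rw [one_mul, div_pow, one_pow]

open scoped Classical in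
lemma ncard_eq (N : ℕ) :
    ((W ∩ {pq : ℕ × ℕ | pq.1 ∈ Set.Icc 1 N ∧ pq.2 ∈ Set.Icc 1 N}).ncard : ℝ) =
    ∑ i ∈ Finset.range N, ∑ j ∈ Finset.range N, if i < j then
      chiG (i + 1) * chiG (j + 1) * (if Nat.Coprime (i + 1) (j + 1) then 1 else 0) else 0 := by
  have e : W ∩ {pq : ℕ × ℕ | pq.1 ∈ Set.Icc 1 N ∧ pq.2 ∈ Set.Icc 1 N} =
      (fun x : ℕ × ℕ => (x.1 + 1, x.2 + 1)) ''
      (((Finset.range N ×ˢ Finset.range N).filter fun x : ℕ × ℕ => (x.1 + 1, x.2 + 1) ∈ W : 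
        Finset (ℕ × ℕ)) : Set (ℕ × ℕ)) := by
    ext ⟨p, q⟩
    constructor
    · rintro ⟨hW, ⟨h1, h2⟩, h3, h4⟩
      simp only at h1 h2 h3 h4
      refine ⟨(p - 1, q - 1), ?_, ?_⟩
      · simp only [Finset.coe_filter, Finset.mem_product, Finset.mem_range, Set.mem_ofPred_eq]
        rw [Nat.sub_add_cancel h1, Nat.sub_add_cancel h3]
        exact ⟨⟨by omega, by omega⟩, hW⟩
      · simp only [Prod.mk.injEq]; omega
    · rintro ⟨⟨i, j⟩, h, h'⟩
      simp only [Finset.coe_filter, Finset.mem_product, Finset.mem_range, Set.mem_ofPred_eq] at h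
      simp only [Prod.mk.injEq] at h'
      obtain ⟨rfl, rfl⟩ := h'
      exact ⟨h.2, ⟨by simp, by simp; omega⟩, by simp, by simp; omega⟩
  rw [e, Set.ncard_image_of_injective _ (by rintro ⟨a, b⟩ ⟨c, d⟩ h; simpa using h),
    Set.ncard_coe_finset, Finset.card_filter, Finset.sum_product]
  push_cast
  refine Finset.sum_congr rfl fun i _ => Finset.sum_congr rfl fun j _ => ?_
  have : (i + 1, j + 1) ∈ W ↔ i + 1 ∉ Gamma ∧ j + 1 ∉ Gamma ∧ i < j ∧ Nat.Coprime (i + 1) (j + 1) := by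
    simp [W]
  simp only [this, chiG]
  split_ifs <;> simp_all

lemma cntT_split {N : ℕ} (hN : 0 < N) :
    cntT N = 2 * ((W ∩ {pq : ℕ × ℕ | pq.1 ∈ Set.Icc 1 N ∧ pq.2 ∈ Set.Icc 1 N}).ncard : ℝ) + 1 := by
  set g : ℕ → ℕ → ℝ := fun i j =>
    chiG (i + 1) * chiG (j + 1) * (if Nat.Coprime (i + 1) (j + 1) then 1 else 0) with hg
  have hsymm : ∀ i j, g i j = g j i := by
    intro i j; simp only [hg, Nat.coprime_comm (n := i + 1)]; ring
  have hdiag : ∀ i, g i i = if i = 0 then 1 else 0 := by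
    intro i
    by_cases hi : i = 0
    · subst hi; simp [hg, chiG_odd]
    · simp [hg, hi]
  have hsp : ∀ i j, g i j = (if i < j then g i j else 0) + (if j < i then g j i else 0)
      + if i = j then g i i else 0 := by
    intro i j
    rcases lt_trichotomy i j with h | h | h
    · simp [h, h.not_gt, h.ne]
    · simp [h]
    · simp [h, h.not_gt, h.ne', hsymm i j]
  have h1 : cntT N = ∑ i ∈ Finset.range N, ∑ j ∈ Finset.range N, g i j := rfl
  have h2 := ncard_eq N
  have h3 : ∑ i ∈ Finset.range N, ∑ j ∈ Finset.range N, (if j < i then g j i else 0) =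
      ∑ i ∈ Finset.range N, ∑ j ∈ Finset.range N, (if i < j then g i j else 0) :=
    Finset.sum_comm
  have h4 : ∑ i ∈ Finset.range N, ∑ j ∈ Finset.range N, (if i = j then g i i else 0) = 1 := by
    calc _ = ∑ i ∈ Finset.range N, g i i := by
          refine Finset.sum_congr rfl fun i hi => ?_
          rw [Finset.sum_ite_eq, if_pos hi]
      _ = 1 := by
          simp_rw [hdiag]
          rw [Finset.sum_ite_eq', if_pos (by simpa using hN)]
  rw [h1, h2]
  rw [Finset.sum_congr rfl fun i _ => Finset.sum_congr rfl fun j _ => hsp i j]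
  simp_rw [Finset.sum_add_distrib]
  rw [h3, h4]
  ring

theorem density_W :
    Tendsto (fun N : ℕ =>
        ((W ∩ {pq : ℕ × ℕ | pq.1 ∈ Set.Icc 1 N ∧ pq.2 ∈ Set.Icc 1 N}).ncard : ℝ)
          / (N : ℝ)^2)
      atTop (𝓝 (5 / (3 * Real.pi^2))) := by
  have h0 : Tendsto (fun N : ℕ => 1 / (N : ℝ) ^ 2) atTop (𝓝 0) := by
    have := (tendsto_one_div_atTop_nhds_zero_nat (𝕜 := ℝ)).pow 2
    simpa using this
  have h := (cntT_tendsto.sub h0).const_mul (1 / 2)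
  have e : 1 / 2 * (10 / (3 * Real.pi ^ 2) - 0) = 5 / (3 * Real.pi ^ 2) := by ring
  rw [e] at h
  refine h.congr' ?_
  filter_upwards [eventually_gt_atTop 0] with N hN
  rw [cntT_split hN]
  ring
end

section
/- Let Ŵ = {(p,q) ∈ ℕ² : (p ∈ Γ or q ∈ Γ), p < q, and p, q are coprime}. Then the limit as N → ∞ of #(Ŵ ∩ [1,N]²)/N² exists and equals 4/(3π²). -/
open Filter Topology

/-- `Ŵ = {(p,q) ∈ ℕ² : p ∈ Γ or q ∈ Γ, p < q, p and q coprime}`. -/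
def What : Set (ℕ × ℕ) :=
  {pq | (pq.1 ∈ Gamma ∨ pq.2 ∈ Gamma) ∧ pq.1 < pq.2 ∧ Nat.Coprime pq.1 pq.2}

open Classical in
noncomputable def GG (n : ℕ) : Finset ℕ := (Finset.Icc 1 n).filter (· ∈ Gamma)
def OO (n : ℕ) : Finset ℕ := (Finset.Icc 1 n).filter (fun q => Odd q)

lemma mem_Gamma (m : ℕ) : m ∈ Gamma ↔ m ≠ 0 ∧ Odd (padicValNat 2 m) := by
  constructor
  · rintro ⟨k, l, hk, hl, rfl⟩
    have h1 : (2*k-1) ≠ 0 := by omega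
    refine ⟨by positivity, ?_⟩
    rw [padicValNat.mul h1 (by positivity), padicValNat.prime_pow,
      padicValNat.eq_zero_of_not_dvd (by omega)]
    exact ⟨l - 1, by omega⟩
  · rintro ⟨h0, j, hj⟩
    obtain ⟨e, t, ht, hm⟩ := Nat.exists_eq_two_pow_mul_odd h0
    obtain ⟨s, rfl⟩ := ht
    have : padicValNat 2 m = e := by
      rw [hm, padicValNat.mul (by positivity) (by omega), padicValNat.prime_pow,
        padicValNat.eq_zero_of_not_dvd (by omega)]
      simp
    refine ⟨s + 1, j + 1, by omega, by omega, ?_⟩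
    rw [hm, ← this, hj, mul_comm]
    congr 1

lemma Gamma_even {m : ℕ} (h : m ∈ Gamma) : 2 ∣ m := by
  obtain ⟨k, l, hk, hl, rfl⟩ := h
  exact Dvd.dvd.mul_left (dvd_pow_self 2 (by omega)) _

lemma Gamma_two_mul {k : ℕ} (hk : k ≠ 0) : 2 * k ∈ Gamma ↔ k ∉ Gamma := by
  rw [mem_Gamma, mem_Gamma, padicValNat.mul (by norm_num) hk]
  simp only [padicValNat.self (show 1 < 2 by norm_num)]
  simp [hk, Nat.odd_add, parity_simps]

lemma Gamma_odd_mul {d m : ℕ} (hd : Odd d) : d * m ∈ Gamma ↔ m ∈ Gamma := by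
  have hd0 : d ≠ 0 := by rintro rfl; simp at hd
  rcases eq_or_ne m 0 with rfl | hm
  · simp [mem_Gamma]
  rw [mem_Gamma, mem_Gamma, padicValNat.mul hd0 hm,
    padicValNat.eq_zero_of_not_dvd (by rcases hd with ⟨a, rfl⟩; omega)]
  simp [hd0]

lemma GG_rec (n : ℕ) : (GG n).card + (GG (n/2)).card = n / 2 := by
  classical
  have h1 : (GG n) = ((Finset.Icc 1 (n/2)).filter (· ∉ Gamma)).image (2 * ·) := by
    ext m
    simp only [GG, Finset.mem_filter, Finset.mem_Icc, Finset.mem_image]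
    constructor
    · rintro ⟨⟨h1, h2⟩, h3⟩
      obtain ⟨k, rfl⟩ := Gamma_even h3
      exact ⟨k, ⟨by omega, (Gamma_two_mul (by omega)).1 h3⟩, rfl⟩
    · rintro ⟨k, ⟨h1, h2⟩, rfl⟩
      exact ⟨by omega, (Gamma_two_mul (by omega)).2 h2⟩
  rw [h1, Finset.card_image_of_injective _ (fun a b h => by simpa using h), GG, add_comm,
    Finset.card_filter_add_card_filter_not]
  simp

lemma GG_bound (n : ℕ) : |((GG n).card : ℝ) - n / 3| ≤ Real.sqrt n := by
  induction n using Nat.strong_induction_on with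
  | _ n ih =>
    rcases lt_or_ge n 2 with h | h
    · have := GG_rec n
      have h0 : n / 2 = 0 := by omega
      have h2 : (GG n).card = 0 := by omega
      rw [h2]
      interval_cases n <;> norm_num
    · have h1 := ih (n/2) (by omega)
      have h2 := GG_rec n
      have h3 : Real.sqrt ((n/2 : ℕ) : ℝ) + 1/3 ≤ Real.sqrt n := by
        have hle : (((n/2 : ℕ) : ℝ)) ≤ (n : ℝ) / 2 := Nat.cast_div_le
        have hn : (2 : ℝ) ≤ n := by exact_mod_cast h
        apply Real.le_sqrt_of_sq_le
        have hs := Real.sq_sqrt (show (0:ℝ) ≤ ((n/2 : ℕ) : ℝ) by positivity)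
        nlinarith [sq_nonneg (Real.sqrt ((n/2 : ℕ) : ℝ) - 1)]
      have h4 : ((GG n).card : ℝ) + (GG (n/2)).card = ((n/2 : ℕ) : ℝ) := by exact_mod_cast h2
      have h5 : (n : ℝ) = 2 * ((n/2 : ℕ) : ℝ) ∨ (n : ℝ) = 2 * ((n/2 : ℕ) : ℝ) + 1 := by
        rcases Nat.mod_two_eq_zero_or_one n with h | h
        · left; exact_mod_cast (by omega : n = 2 * (n/2))
        · right; exact_mod_cast (by omega : n = 2 * (n/2) + 1)
      rw [abs_le] at h1 ⊢
      rcases h5 with h5 | h5 <;> constructor <;> linarith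

lemma OO_card (n : ℕ) : (OO n).card = (n + 1) / 2 := by
  induction n with
  | zero => simp [OO]
  | succ n ih =>
    rw [OO] at *
    rw [← Finset.insert_Icc_right_eq_Icc_add_one (by omega), Finset.filter_insert]
    split_ifs with h
    · rw [Finset.card_insert_of_notMem (by simp), ih]
      rcases h with ⟨a, ha⟩; omega
    · rw [ih]
      rw [Nat.not_odd_iff_even] at h
      rcases h with ⟨a, ha⟩; omega

lemma GG_le (n : ℕ) : (GG n).card ≤ n := by
  have := GG_rec n; omega
lemma OO_le (n : ℕ) : (OO n).card ≤ n := by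
  rw [OO_card]; omega

lemma GG_lim : Tendsto (fun n : ℕ => ((GG n).card : ℝ) / n) atTop (𝓝 (1/3)) := by
  rw [tendsto_iff_norm_sub_tendsto_zero]
  have h : Tendsto (fun n : ℕ => (Real.sqrt n)⁻¹) atTop (𝓝 0) :=
    (tendsto_inv_atTop_zero.comp Real.tendsto_sqrt_atTop).comp tendsto_natCast_atTop_atTop
  refine squeeze_zero' (Eventually.of_forall fun _ => norm_nonneg _) ?_ h
  filter_upwards [eventually_gt_atTop 0] with n hn
  have hn' : (0:ℝ) < n := by exact_mod_cast hn
  have : ((GG n).card : ℝ) / n - 1/3 = ((GG n).card - n/3) / n := by field_simp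
  rw [this, Real.norm_eq_abs, abs_div, abs_of_pos hn', div_le_iff₀ hn']
  rw [inv_mul_eq_div, Real.div_sqrt]
  exact GG_bound n

lemma OO_lim : Tendsto (fun n : ℕ => ((OO n).card : ℝ) / n) atTop (𝓝 (1/2)) := by
  rw [tendsto_iff_norm_sub_tendsto_zero]
  have h : Tendsto (fun n : ℕ => (n : ℝ)⁻¹) atTop (𝓝 0) := tendsto_inv_atTop_nhds_zero_nat
  refine squeeze_zero' (Eventually.of_forall fun _ => norm_nonneg _) ?_ h
  filter_upwards [eventually_gt_atTop 0] with n hn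
  have hn' : (0:ℝ) < n := by exact_mod_cast hn
  have : ((OO n).card : ℝ) / n - 1/2 = ((OO n).card - n/2) / n := by field_simp
  rw [this, Real.norm_eq_abs, abs_div, abs_of_pos hn', div_le_iff₀ hn', OO_card,
    inv_mul_cancel₀ hn'.ne']
  have h5 : (2 * (((n+1)/2 : ℕ) : ℝ)) = n ∨ (2 * (((n+1)/2 : ℕ) : ℝ)) = n + 1 := by
    rcases Nat.mod_two_eq_zero_or_one n with h | h
    · left; exact_mod_cast (by omega : 2 * ((n+1)/2) = n)
    · right; exact_mod_cast (by omega : 2 * ((n+1)/2) = n + 1)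
  rw [abs_le]
  rcases h5 with h5 | h5 <;> constructor <;> linarith

lemma floor_lim (d : ℕ) (hd : 0 < d) :
    Tendsto (fun N : ℕ => ((N / d : ℕ) : ℝ) / N) atTop (𝓝 (1/d)) := by
  have := (tendsto_nat_floor_mul_div_atTop (R := ℝ) (a := 1/d) (by positivity)).comp
    tendsto_natCast_atTop_atTop
  refine this.congr fun N => ?_
  simp only [Function.comp]
  rw [one_div_mul_eq_div, Nat.floor_div_natCast, Nat.floor_natCast]

lemma term_lim (d : ℕ) (hd : 0 < d) :
    Tendsto (fun N : ℕ => ((GG (N/d)).card : ℝ) * (OO (N/d)).card / (N:ℝ)^2) atTop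
      (𝓝 (1/6 * (1/(d:ℝ)^2))) := by
  have hN := Nat.tendsto_div_const_atTop hd.ne'
  have := ((GG_lim.comp hN).mul (OO_lim.comp hN)).mul ((floor_lim d hd).pow 2)
  refine (this.congr' ?_).trans (le_of_eq ?_)
  · filter_upwards [hN.eventually_gt_atTop 0, eventually_gt_atTop 0] with N h h'
    simp only [Function.comp]
    have h1 : ((N/d : ℕ) : ℝ) ≠ 0 := by exact_mod_cast h.ne'
    have h2 : (N : ℝ) ≠ 0 := by exact_mod_cast h'.ne'
    field_simp
  · congr 1; ring

noncomputable def mo (d : ℕ) : ℝ := if Odd d then (ArithmeticFunction.moebius d : ℝ) else 0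

lemma mo_abs (d : ℕ) : |mo d| ≤ 1 := by
  unfold mo
  split_ifs
  · exact_mod_cast ArithmeticFunction.abs_moebius_le_one
  · simp

lemma tsum_mu : HasSum (fun d : ℕ => (ArithmeticFunction.moebius d : ℝ) * (1/(d:ℝ)^2)) (6/Real.pi^2) := by
  have h := ArithmeticFunction.LSeries_zeta_mul_Lseries_moebius (s := 2) (by norm_num)
  have hs := (ArithmeticFunction.LSeriesSummable_moebius_iff (s := 2)).2 (by norm_num)
  rw [ArithmeticFunction.LSeries_zeta_eq_riemannZeta (by norm_num), riemannZeta_two] at h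
  have h2 := hs.hasSum
  have h3 : LSeries (fun n => ((ArithmeticFunction.moebius n : ℤ) : ℂ)) 2 = ((6/Real.pi^2 : ℝ) : ℂ) := by
    have : (Real.pi : ℂ) ≠ 0 := by exact_mod_cast Real.pi_ne_zero
    push_cast
    field_simp at h ⊢
    linear_combination h
  rw [LSeries] at h3
  rw [h3] at h2
  rw [← Complex.hasSum_ofReal]
  convert h2 using 2 with d
  rcases Nat.eq_zero_or_pos d with rfl | hd
  · simp
  · rw [LSeries.term_of_ne_zero hd.ne']
    push_cast
    rw [mul_one_div, show (2 : ℂ) = ((2 : ℕ) : ℂ) by norm_num, Complex.cpow_natCast]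

lemma tsum_mo : HasSum (fun d : ℕ => mo d * (1/(d:ℝ)^2)) (8/Real.pi^2) := by
  have hs : Summable (fun d : ℕ => mo d * (1/(d:ℝ)^2)) := by
    refine Summable.of_norm_bounded hasSum_zeta_two.summable fun d => ?_
    rw [norm_mul, Real.norm_eq_abs, Real.norm_of_nonneg (by positivity)]
    exact mul_le_of_le_one_left (by positivity) (mo_abs d)
  have h1 := hs.hasSum
  have h2 : HasSum (fun d : ℕ => (if Even d then (ArithmeticFunction.moebius d : ℝ) * (1/(d:ℝ)^2) else 0))
      (-1/4 * ∑' d, mo d * (1/(d:ℝ)^2)) := by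
    have := h1.mul_left (-1/4)
    have hinj : Function.Injective (fun k : ℕ => 2 * k) := fun a b h => by simpa using h
    rw [← hinj.hasSum_iff]
    · refine (congrArg (fun f : ℕ → ℝ => HasSum f _) (funext fun k => ?_)).mpr this
      simp only [Function.comp, even_two_mul, if_true, mo]
      rcases Nat.even_or_odd k with h | h
      · have : ¬ Squarefree (2 * k) := by
          intro hsq
          obtain ⟨a, rfl⟩ := h
          have := hsq 2 ⟨a, by ring⟩
          simp at this
        rw [ArithmeticFunction.moebius_eq_zero_of_not_squarefree this,
          if_neg (Nat.not_odd_iff_even.2 h)]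
        simp
      · rw [if_pos h, ArithmeticFunction.isMultiplicative_moebius.map_mul_of_coprime
          (Nat.coprime_two_left.2 h), ArithmeticFunction.moebius_apply_prime Nat.prime_two]
        push_cast
        field_simp
        norm_num
    · intro x hx
      rw [if_neg]
      rintro ⟨a, rfl⟩
      exact hx ⟨a, by ring⟩
  have h3 := (h1.add h2).unique (by
    convert tsum_mu using 2 with d
    unfold mo
    rcases Nat.even_or_odd d with h | h
    · simp [h]
    · simp [h])
  have : (∑' d, mo d * (1/(d:ℝ)^2)) = 8/Real.pi^2 := by
    linear_combination 4/3 * h3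
  rwa [this] at h1

lemma count1 (N : ℕ) :
    (What ∩ {pq : ℕ × ℕ | pq.1 ∈ Set.Icc 1 N ∧ pq.2 ∈ Set.Icc 1 N}).ncard
     = ((GG N ×ˢ OO N).filter (fun pq => Nat.Coprime pq.1 pq.2)).card := by
  classical
  have hodd : ∀ p q : ℕ, p ∈ Gamma → Nat.Coprime p q → Odd q := by
    intro p q hp h
    rw [← Nat.not_even_iff_odd]
    intro hq
    have := Nat.dvd_gcd (Gamma_even hp) hq.two_dvd
    rw [h] at this; omega
  have hne : ∀ p q : ℕ, p ∈ Gamma → Nat.Coprime p q → q ∉ Gamma := by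
    intro p q hp h hq
    have := hodd p q hp h
    have := Gamma_even hq
    rcases hodd p q hp h with ⟨a, rfl⟩
    omega
  rw [← Set.ncard_coe_finset]
  refine Set.ncard_congr (fun pq _ => if pq.1 ∈ Gamma then pq else (pq.2, pq.1)) ?_ ?_ ?_
  · rintro ⟨p, q⟩ ⟨⟨h1, h2, h3⟩, ⟨h4, h5⟩, h6, h7⟩
    simp only [GG, OO, Finset.coe_filter, Finset.mem_product, Finset.mem_filter, Finset.mem_Icc, Set.mem_setOf_eq] at *
    split_ifs with h
    · exact ⟨⟨⟨⟨h4, h5⟩, h⟩, ⟨h6, h7⟩, hodd p q h h3⟩, h3⟩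
    · have h := h1.resolve_left h
      exact ⟨⟨⟨⟨h6, h7⟩, h⟩, ⟨h4, h5⟩, hodd q p h h3.symm⟩, h3.symm⟩
  · rintro ⟨p, q⟩ ⟨p', q'⟩ ⟨⟨h1, h2, h3⟩, -⟩ ⟨⟨h1', h2', h3'⟩, -⟩ h
    simp only at *
    split_ifs at h <;> simp only [Prod.mk.injEq] at * <;> omega
  · rintro ⟨p, q⟩ h
    simp only [GG, OO, Finset.coe_filter, Finset.mem_product, Finset.mem_filter, Finset.mem_Icc, Set.mem_setOf_eq] at h
    obtain ⟨⟨⟨⟨h4, h5⟩, h⟩, ⟨h6, h7⟩, ho⟩, h3⟩ := h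
    have hq := hne p q h h3
    rcases lt_trichotomy p q with hl | hl | hl
    · exact ⟨(p, q), ⟨⟨Or.inl h, hl, h3⟩, ⟨h4, h5⟩, h6, h7⟩, by simp [h]⟩
    · subst hl; exact absurd h hq
    · exact ⟨(q, p), ⟨⟨Or.inr h, hl, h3.symm⟩, ⟨h6, h7⟩, h4, h5⟩, by simp [hq]⟩

lemma GG_div (N d : ℕ) (hd : Odd d) : ((GG N).filter (d ∣ ·)).card = (GG (N/d)).card := by
  classical
  have hd0 : 0 < d := hd.pos
  have : (GG N).filter (d ∣ ·) = (GG (N/d)).image (d * ·) := by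
    ext m
    simp only [GG, Finset.mem_filter, Finset.mem_Icc, Finset.mem_image, Nat.le_div_iff_mul_le hd0]
    constructor
    · rintro ⟨⟨⟨h1, h2⟩, h3⟩, k, rfl⟩
      exact ⟨k, ⟨⟨Nat.pos_of_mul_pos_left h1, by linarith⟩, (Gamma_odd_mul hd).1 h3⟩, rfl⟩
    · rintro ⟨k, ⟨⟨h1, h2⟩, h3⟩, rfl⟩
      exact ⟨⟨⟨Nat.mul_pos hd0 h1, by linarith⟩, (Gamma_odd_mul hd).2 h3⟩, dvd_mul_right _ _⟩
  rw [this, Finset.card_image_of_injective _ (fun a b h => by simpa [hd0.ne'] using h)]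

lemma OO_div (N d : ℕ) (hd : Odd d) : ((OO N).filter (d ∣ ·)).card = (OO (N/d)).card := by
  classical
  have hd0 : 0 < d := hd.pos
  have : (OO N).filter (d ∣ ·) = (OO (N/d)).image (d * ·) := by
    ext m
    simp only [OO, Finset.mem_filter, Finset.mem_Icc, Finset.mem_image, Nat.le_div_iff_mul_le hd0]
    constructor
    · rintro ⟨⟨⟨h1, h2⟩, h3⟩, k, rfl⟩
      exact ⟨k, ⟨⟨Nat.pos_of_mul_pos_left h1, by linarith⟩, (Nat.odd_mul.1 h3).2⟩, rfl⟩
    · rintro ⟨k, ⟨⟨h1, h2⟩, h3⟩, rfl⟩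
      exact ⟨⟨⟨Nat.mul_pos hd0 h1, by linarith⟩, hd.mul h3⟩, dvd_mul_right _ _⟩
  rw [this, Finset.card_image_of_injective _ (fun a b h => by simpa [hd0.ne'] using h)]

lemma mo_sum (N p q : ℕ) (hq1 : q ∈ OO N) :
    (if Nat.Coprime p q then (1:ℝ) else 0)
      = ∑ d ∈ Finset.Icc 1 N, mo d * ((if d ∣ p then 1 else 0) * (if d ∣ q then 1 else 0)) := by
  simp only [OO, Finset.mem_filter, Finset.mem_Icc] at hq1
  obtain ⟨⟨h1, h2⟩, h3⟩ := hq1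
  have hg : Nat.gcd p q ≠ 0 := (Nat.gcd_pos_of_pos_right _ h1).ne'
  have key : ((∑ d ∈ (Nat.gcd p q).divisors, ArithmeticFunction.moebius d : ℤ) : ℝ)
      = if Nat.Coprime p q then (1:ℝ) else 0 := by
    rw [← ArithmeticFunction.coe_zeta_mul_apply, ArithmeticFunction.coe_zeta_mul_moebius,
      ArithmeticFunction.one_apply]
    simp [Nat.Coprime]
  rw [← key]
  push_cast
  have : (Nat.gcd p q).divisors = (Finset.Icc 1 N).filter (fun d => d ∣ p ∧ d ∣ q) := by
    ext d
    simp only [Nat.mem_divisors, Finset.mem_filter, Finset.mem_Icc, Nat.dvd_gcd_iff]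
    constructor
    · rintro ⟨⟨a, b⟩, -⟩
      have := Nat.le_of_dvd h1 b
      have := Nat.pos_of_dvd_of_pos b h1
      exact ⟨by omega, a, b⟩
    · rintro ⟨-, h⟩; exact ⟨h, hg⟩
  rw [this, Finset.sum_filter]
  refine Finset.sum_congr rfl fun d _ => ?_
  by_cases hp : d ∣ p <;> by_cases hq : d ∣ q <;> simp [hp, hq]
  rw [mo, if_pos (h3.of_dvd_nat hq)]

lemma count2 (N : ℕ) :
    (((GG N ×ˢ OO N).filter (fun pq => Nat.Coprime pq.1 pq.2)).card : ℝ)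
     = ∑ d ∈ Finset.Icc 1 N, mo d * (((GG (N/d)).card : ℝ) * (OO (N/d)).card) := by
  rw [Finset.card_filter]
  push_cast
  rw [Finset.sum_congr rfl (fun pq h => mo_sum N pq.1 pq.2 (Finset.mem_product.1 h).2),
    Finset.sum_comm]
  refine Finset.sum_congr rfl fun d _ => ?_
  by_cases hd : Odd d
  · rw [← Finset.mul_sum, Finset.sum_product, ← GG_div N d hd, ← OO_div N d hd,
      Finset.card_filter, Finset.card_filter]
    push_cast
    rw [Finset.sum_mul_sum]
  · simp [mo, hd]

theorem density_What :
    Tendsto (fun N : ℕ =>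
        ((What ∩ {pq : ℕ × ℕ | pq.1 ∈ Set.Icc 1 N ∧ pq.2 ∈ Set.Icc 1 N}).ncard : ℝ)
          / (N : ℝ)^2)
      atTop (𝓝 (4 / (3 * Real.pi^2))) := by
  have hsum : ∀ N : ℕ, ((What ∩ {pq : ℕ × ℕ | pq.1 ∈ Set.Icc 1 N ∧ pq.2 ∈ Set.Icc 1 N}).ncard : ℝ)
          / (N : ℝ)^2 = ∑' d : ℕ, mo d * (((GG (N/d)).card : ℝ) * (OO (N/d)).card / (N:ℝ)^2) := by
    intro N
    rw [count1, count2, Finset.sum_div, tsum_eq_sum (s := Finset.Icc 1 N)]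
    · exact Finset.sum_congr rfl fun d _ => by ring
    · intro d hd
      rw [Finset.mem_Icc] at hd
      have : N / d = 0 := by
        rcases Nat.eq_zero_or_pos d with rfl | h
        · simp
        · exact Nat.div_eq_of_lt (by omega)
      rw [this]; simp [GG]
  simp_rw [hsum]
  have hlim : ∑' d : ℕ, mo d * (1/6 * (1/(d:ℝ)^2)) = 4 / (3 * Real.pi^2) := by
    have h := (tsum_mo.mul_left (1/6)).tsum_eq
    rw [show 4 / (3 * Real.pi^2) = 1/6 * (8/Real.pi^2) by field_simp; norm_num, ← h]
    exact tsum_congr fun d => by ring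
  rw [← hlim]
  refine tendsto_tsum_of_dominated_convergence hasSum_zeta_two.summable ?_ ?_
  · intro d
    rcases Nat.eq_zero_or_pos d with rfl | h
    · simp [mo]
    · exact (term_lim d h).const_mul _
  · filter_upwards [eventually_gt_atTop 0] with N hN d
    rw [norm_mul, Real.norm_eq_abs, Real.norm_of_nonneg (by positivity)]
    refine (mul_le_of_le_one_left (by positivity) (mo_abs d)).trans ?_
    rcases Nat.eq_zero_or_pos d with rfl | h
    · simp [GG]
    have hN' : (0:ℝ) < N := by exact_mod_cast hN
    have hd' : (0:ℝ) < d := by exact_mod_cast h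
    have hle : (((N/d : ℕ) : ℝ)) ≤ (N : ℝ) / d := Nat.cast_div_le
    have h1 : ((GG (N/d)).card : ℝ) ≤ N / d := le_trans (by exact_mod_cast GG_le _) hle
    have h2 : ((OO (N/d)).card : ℝ) ≤ N / d := le_trans (by exact_mod_cast OO_le _) hle
    rw [div_le_iff₀ (by positivity)]
    calc _ ≤ (N/d : ℝ) * (N/d) := by gcongr
      _ = _ := by ring
end

section
/- If t = p/q ∈ (0,1) with p, q coprime positive integers, p < q, and both p ∉ Γ and q ∉ Γ, then the Hausdorff dimension of C_t is strictly less than 1. -/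
open Filter Topology

noncomputable def ec (x : ℝ) : ℂ := Complex.exp (Complex.I * ((2 * Real.pi * x : ℝ) : ℂ))

lemma ec_nat_mul (x : ℝ) (m : ℕ) : ec x ^ m = ec (m * x) := by
  unfold ec
  rw [← Complex.exp_nat_mul]
  congr 1
  push_cast
  ring

lemma ec_nat (m : ℕ) : ec m = 1 := by
  unfold ec
  rw [Complex.exp_eq_one_iff]
  exact ⟨m, by push_cast; ring⟩

lemma one_add_ec_ne (p : ℕ) (hpG : p ∉ Gamma) (j : ℕ) : 1 + ec (p / 4 ^ (j+1)) ≠ 0 := by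
  intro h
  apply hpG
  have h1 : ec (p / 4 ^ (j+1) + 1/2) = 1 := by
    have : ec (p / 4 ^ (j+1) + 1/2) = ec (p / 4 ^ (j+1)) * Complex.exp (Real.pi * Complex.I) := by
      unfold ec
      rw [← Complex.exp_add]
      congr 1
      push_cast
      ring
    rw [this, Complex.exp_pi_mul_I]
    linear_combination -h
  unfold ec at h1
  rw [Complex.exp_eq_one_iff] at h1
  obtain ⟨n, hn⟩ := h1
  have h2 : ((p : ℝ) / 4 ^ (j+1) + 1/2) = n := by
    have h3 : (2 * Real.pi * Complex.I) * (((p : ℝ) / 4 ^ (j+1) + 1/2 : ℝ) : ℂ) = (2 * Real.pi * Complex.I) * n := by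
      rw [mul_comm _ (n:ℂ), ← hn]; push_cast; ring
    have := mul_left_cancel₀ Complex.two_pi_I_ne_zero h3
    exact_mod_cast this
  have h4 : (2 * p : ℝ) = 4 ^ (j+1) * (2 * n - 1) := by
    rw [← h2]; field_simp; ring
  have h5 : (2 * p : ℤ) = 4 ^ (j+1) * (2 * n - 1) := by exact_mod_cast h4
  have hn1 : 1 ≤ n := by
    by_contra hc
    have : (4:ℤ) ^ (j+1) * (2 * n - 1) < 0 := mul_neg_of_pos_of_neg (by positivity) (by omega)
    omega
  lift n to ℕ using by omega
  refine ⟨n, j+1, by omega, by omega, ?_⟩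
  have e1 : (4:ℤ)^(j+1) = 2 * 2 ^ (2*(j+1)-1) := by
    rw [← pow_succ', show 2*(j+1)-1+1 = 2*(j+1) by omega, pow_mul]; norm_num
  rw [e1] at h5
  zify [show 1 ≤ 2 * n by omega]
  linarith

lemma prod_lower (p : ℕ) (hpG : p ∉ Gamma) :
    ∃ c : ℝ, 0 < c ∧ ∀ m, c ≤ ‖∏ j ∈ Finset.range m, ((1 + ec (p / 4 ^ (j+1))) / 2)‖ := by
  set f : ℕ → ℂ := fun j => (ec (p / 4 ^ (j+1)) - 1) / 2 with hf
  have hfe : ∀ j, 1 + f j = (1 + ec (p / 4 ^ (j+1))) / 2 := by intro j; simp only [hf]; ring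
  have hne : ∀ j, 1 + f j ≠ 0 := by
    intro j; rw [hfe]; exact div_ne_zero (one_add_ec_ne p hpG j) two_ne_zero
  have hs : Summable (fun j => ‖f j‖) := by
    have hg : Summable (fun j : ℕ => (Real.pi * p / 4) * (1/4 : ℝ) ^ j) :=
      (summable_geometric_of_lt_one (by norm_num) (by norm_num)).mul_left _
    refine Summable.of_nonneg_of_le (fun _ => norm_nonneg _) (fun j => ?_) hg
    have h1 := @Real.norm_exp_I_mul_ofReal_sub_one_le (2 * Real.pi * (p / 4 ^ (j+1)))
    simp only [hf, norm_div]
    unfold ec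
    rw [Real.norm_of_nonneg (by positivity)] at h1
    have : (Real.pi * p / 4) * (1/4 : ℝ) ^ j = 2 * Real.pi * (p / 4 ^ (j+1)) / 2 := by
      rw [one_div, inv_pow]; field_simp; ring
    rw [this]
    simpa using div_le_div_of_nonneg_right h1 (by norm_num : (0:ℝ) ≤ 2)
  have hm := (multipliable_one_add_of_summable hs).hasProd.tendsto_prod_nat
  have hl := tprod_one_add_ne_zero_of_summable hne hs
  have ht := (hm.inv₀ hl).norm
  obtain ⟨B, hB⟩ := ht.bddAbove_range
  have hB' : ∀ m, ‖(∏ i ∈ Finset.range m, (1 + f i))⁻¹‖ ≤ B := fun m => hB ⟨m, rfl⟩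
  have hB1 : 1 ≤ B := by simpa using hB' 0
  refine ⟨B⁻¹, by positivity, fun m => ?_⟩
  have hpos : 0 < ‖∏ i ∈ Finset.range m, (1 + f i)‖ :=
    norm_pos_iff.2 (Finset.prod_ne_zero_iff.2 fun i _ => hne i)
  have := hB' m
  rw [norm_inv] at this
  simp_rw [← hfe]
  exact inv_le_of_inv_le₀ hpos this

def dg (p q : ℕ) (x : Bool × Bool) : ℕ := p * x.1.toNat + q * x.2.toNat

def wval (p q n : ℕ) (w : Fin n → Bool × Bool) : ℕ := ∑ i : Fin n, 4 ^ (i : ℕ) * dg p q (w i)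

lemma dg_le (p q : ℕ) (x : Bool × Bool) : dg p q x ≤ p + q := by
  rcases x with ⟨a, b⟩
  cases a <;> cases b <;> simp [dg]

lemma wval_lt (p q n : ℕ) (h : 0 < p + q) (w : Fin n → Bool × Bool) :
    wval p q n w < (p + q) * 4 ^ n := by
  have h1 : wval p q n w ≤ ∑ i : Fin n, 4 ^ (i : ℕ) * (p + q) :=
    Finset.sum_le_sum fun i _ => Nat.mul_le_mul_left _ (dg_le p q _)
  have h2 : ∀ n : ℕ, (∑ i ∈ Finset.range n, 4 ^ i * (p + q)) < (p + q) * 4 ^ n := by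
    intro n
    induction n with
    | zero => simpa using h
    | succ n ih => 
      have : 0 < (p + q) * 4 ^ n := by positivity
      rw [Finset.sum_range_succ, pow_succ, mul_comm (4 ^ n) (p + q), ← mul_assoc]
      omega
  rw [Fin.sum_univ_eq_sum_range (fun i => 4 ^ i * (p + q))] at h1
  exact h1.trans_lt (h2 n)

lemma sum_pow_wval (p q n : ℕ) (z : ℂ) :
    ∑ w, z ^ wval p q n w =
      ∏ i ∈ Finset.range n, ((1 + z ^ (4 ^ i * p)) * (1 + z ^ (4 ^ i * q))) := by
  rw [← Fin.prod_univ_eq_prod_range (fun i => ((1 + z ^ (4 ^ i * p)) * (1 + z ^ (4 ^ i * q))))]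
  have : ∀ i : Fin n, ((1 + z ^ (4 ^ (i:ℕ) * p)) * (1 + z ^ (4 ^ (i:ℕ) * q))) =
      ∑ x : Bool × Bool, z ^ (4 ^ (i : ℕ) * dg p q x) := by
    intro i
    rw [Fintype.sum_prod_type]
    simp [dg, mul_add, pow_add]
    ring
  simp_rw [this]
  rw [Fintype.prod_sum]
  refine Finset.sum_congr rfl fun w _ => ?_
  rw [wval, Finset.prod_pow_eq_pow_sum]

lemma parseval_le {W : Type*} [Fintype W] (v : W → ℕ) (N K : ℕ) (hN : 0 < N) (ζ : ℂ)
    (hζ : IsPrimitiveRoot ζ N)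
    (hK : ∀ w, (Finset.univ.filter fun w' => v w ≡ v w' [MOD N]).card ≤ K) :
    ∑ k ∈ Finset.range N, ‖∑ w, (ζ ^ k) ^ v w‖ ^ 2 ≤ N * (Fintype.card W * K) := by
  have hn1 : ‖ζ‖ = 1 := hζ.norm'_eq_one hN.ne'
  have hz0 : ζ ≠ 0 := hζ.ne_zero hN.ne'
  have hconj : (starRingEnd ℂ) ζ = ζ⁻¹ := (Complex.inv_eq_conj hn1).symm
  have key : ∀ a b : ℕ, ∑ k ∈ Finset.range N, (ζ ^ k) ^ a * ((ζ⁻¹) ^ k) ^ b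
      = if a ≡ b [MOD N] then (N : ℂ) else 0 := by
    intro a b
    have h1 : ∀ k, (ζ ^ k) ^ a * ((ζ⁻¹) ^ k) ^ b = (ζ ^ a * (ζ⁻¹) ^ b) ^ k := by
      intro k; rw [mul_pow, pow_right_comm, pow_right_comm ζ⁻¹]
    simp_rw [h1]
    have hx : ζ ^ a * (ζ⁻¹) ^ b = 1 ↔ a ≡ b [MOD N] := by
      rw [inv_pow, mul_inv_eq_one₀ (pow_ne_zero _ hz0),
        (hζ.isOfFinOrder hN.ne').pow_eq_pow_iff_modEq, ← hζ.eq_orderOf]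
    split_ifs with h
    · rw [hx.2 h]; simp
    · have hne : ζ ^ a * (ζ⁻¹) ^ b ≠ 1 := fun hh => h (hx.1 hh)
      rw [geom_sum_eq hne]
      have : (ζ ^ a * (ζ⁻¹) ^ b) ^ N = 1 := by
        rw [mul_pow, pow_right_comm, pow_right_comm ζ⁻¹, inv_pow, hζ.pow_eq_one]; simp
      rw [this]; simp
  have hC : ((∑ k ∈ Finset.range N, ‖∑ w, (ζ ^ k) ^ v w‖ ^ 2 : ℝ) : ℂ)
      = ((∑ w, (N : ℝ) * (Finset.univ.filter fun w' => v w ≡ v w' [MOD N]).card : ℝ) : ℂ) := by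
    push_cast
    calc ∑ k ∈ Finset.range N, ((‖∑ w, (ζ ^ k) ^ v w‖ : ℂ)) ^ 2
        = ∑ k ∈ Finset.range N, ∑ w, ∑ w', (ζ ^ k) ^ v w * ((ζ⁻¹) ^ k) ^ v w' := by
          refine Finset.sum_congr rfl fun k _ => ?_
          rw [← Complex.mul_conj', map_sum, Finset.sum_mul_sum]
          simp [hconj]
      _ = ∑ w, ∑ w', ∑ k ∈ Finset.range N, (ζ ^ k) ^ v w * ((ζ⁻¹) ^ k) ^ v w' := by
          rw [Finset.sum_comm]
          refine Finset.sum_congr rfl fun w _ => ?_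
          rw [Finset.sum_comm]
      _ = _ := by
          refine Finset.sum_congr rfl fun w _ => ?_
          simp_rw [key]
          rw [← Finset.sum_filter, Finset.sum_const, nsmul_eq_mul, mul_comm]
  rw [Complex.ofReal_inj.1 hC]
  calc _ ≤ ∑ w : W, (N : ℝ) * K := by
        refine Finset.sum_le_sum fun w _ => ?_
        gcongr
        exact hK w
    _ = _ := by simp; ring

lemma fiber_card (p q n : ℕ) (h : 0 < p + q) (hinj : Function.Injective (wval p q n))
    (w : Fin n → Bool × Bool) :
    (Finset.univ.filter fun w' => wval p q n w ≡ wval p q n w' [MOD 4 ^ n]).card ≤ p + q := by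
  rw [← Finset.card_range (p + q)]
  refine Finset.card_le_card_of_injOn (fun w' => wval p q n w' / 4 ^ n) ?_ ?_
  · intro w' _
    simp only [Finset.coe_range, Set.mem_Iio]
    exact Nat.div_lt_of_lt_mul (by rw [mul_comm]; exact wval_lt p q n h w')
  · intro a ha b hb hab
    simp only [Finset.coe_filter, Finset.mem_univ, true_and, Set.mem_ofPred_eq] at ha hb
    have : wval p q n a % 4 ^ n = wval p q n b % 4 ^ n := ha.symm.trans hb
    apply hinj
    simp only at hab
    rw [← Nat.div_add_mod (wval p q n a) (4^n), hab, this, Nat.div_add_mod]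

lemma prim_ec (n : ℕ) : IsPrimitiveRoot (ec (1 / 4 ^ n)) (4 ^ n) := by
  have := Complex.isPrimitiveRoot_exp (4 ^ n) (by positivity)
  convert this using 1
  unfold ec
  congr 1
  push_cast
  ring

lemma half_prod (p n m : ℕ) (hm : m ≤ n) :
    ∏ i ∈ Finset.range n, (1 + ec (1 / 4 ^ m) ^ (4 ^ i * p)) =
      2 ^ n * ∏ j ∈ Finset.range m, ((1 + ec (p / 4 ^ (j+1))) / 2) := by
  obtain ⟨k, rfl⟩ := Nat.exists_eq_add_of_le hm
  rw [Finset.prod_range_add, Finset.prod_div_distrib, Finset.prod_const, Finset.card_range, pow_add]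
  have h1 : ∀ i, (1 + ec (1 / 4 ^ m) ^ (4 ^ (m + i) * p)) = 2 := by
    intro i
    rw [ec_nat_mul, show (((4 ^ (m + i) * p : ℕ) : ℝ) * (1 / 4 ^ m)) = ((4 ^ i * p : ℕ) : ℝ) by
      push_cast; rw [pow_add]; field_simp, ec_nat]
    norm_num
  simp_rw [h1]
  rw [← Finset.prod_range_reflect]
  have h2 : ∏ j ∈ Finset.range m, (1 + ec (1 / 4 ^ m) ^ (4 ^ (m - 1 - j) * p))
      = ∏ j ∈ Finset.range m, (1 + ec (p / 4 ^ (j+1))) := by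
    refine Finset.prod_congr rfl fun j hj => ?_
    rw [Finset.mem_range] at hj
    rw [ec_nat_mul]
    congr 2
    obtain ⟨r, rfl⟩ := Nat.exists_eq_add_of_le (Nat.succ_le_of_lt hj)
    rw [show j.succ + r - 1 - j = r by omega, show j.succ + r = (j + 1) + r from rfl, pow_add]
    push_cast
    field_simp
  rw [h2]
  simp
  field_simp

lemma exists_overlap (p q : ℕ) (hp : 0 < p) (hpG : p ∉ Gamma) (hqG : q ∉ Gamma) :
    ∃ n, ¬ Function.Injective (wval p q n) := by
  by_contra hcon
  push Not at hcon
  obtain ⟨c, hc, hcp⟩ := prod_lower p hpG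
  obtain ⟨c', hc', hcq⟩ := prod_lower q hqG
  have main : ∀ n : ℕ, n * (c * c') ^ 2 ≤ ((p + q : ℕ) : ℝ) := by
    intro n
    have h1 := parseval_le (wval p q n) (4 ^ n) (p + q) (by positivity) _ (prim_ec n)
      (fiber_card p q n (by omega) (hcon n))
    have hcard : (Fintype.card (Fin n → Bool × Bool) : ℝ) = 4 ^ n := by
      simp
    rw [hcard] at h1
    have h2 : ∀ k ∈ Finset.range n, (4 ^ n * (c * c')) ^ 2 ≤
        ‖∑ w, (ec (1 / 4 ^ n) ^ (4 ^ k)) ^ wval p q n w‖ ^ 2 := by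
      intro k hk
      rw [Finset.mem_range] at hk
      have he : ec (1 / 4 ^ n) ^ (4 ^ k) = ec (1 / 4 ^ (n - k)) := by
        rw [ec_nat_mul]
        congr 1
        obtain ⟨r, rfl⟩ := Nat.exists_eq_add_of_le hk.le
        rw [show k + r - k = r by omega, pow_add]
        push_cast
        field_simp
      rw [he, sum_pow_wval, Finset.prod_mul_distrib, half_prod _ _ _ (Nat.sub_le n k),
        half_prod _ _ _ (Nat.sub_le n k), norm_mul, norm_mul, norm_mul]
      have e4 : (4 : ℝ) ^ n = 2 ^ n * 2 ^ n := by rw [← mul_pow]; norm_num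
      rw [e4]
      simp only [norm_pow, Complex.norm_ofNat]
      have := hcp (n - k)
      have := hcq (n - k)
      calc _ = ((2 ^ n * c) * (2 ^ n * c')) ^ 2 := by ring
        _ ≤ _ := by gcongr
    have h3 : ∑ k ∈ Finset.range n, ‖∑ w, (ec (1 / 4 ^ n) ^ (4 ^ k)) ^ wval p q n w‖ ^ 2 ≤
        ∑ k ∈ Finset.range (4 ^ n), ‖∑ w, (ec (1 / 4 ^ n) ^ k) ^ wval p q n w‖ ^ 2 := by
      rw [← Finset.sum_image (s := Finset.range n) (g := fun k => 4 ^ k)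
        (f := fun k => ‖∑ w, (ec (1 / 4 ^ n) ^ k) ^ wval p q n w‖ ^ 2)
        (fun a _ b _ hab => Nat.pow_right_injective (le_refl 2 |>.trans (by norm_num)) hab)]
      refine Finset.sum_le_sum_of_subset_of_nonneg ?_ (fun _ _ _ => by positivity)
      intro x hx
      simp only [Finset.mem_image, Finset.mem_range] at hx ⊢
      obtain ⟨k, hk, rfl⟩ := hx
      exact Nat.pow_lt_pow_right (by norm_num) hk
    have h4 := (Finset.sum_le_sum h2).trans (h3.trans h1)
    rw [Finset.sum_const, Finset.card_range, nsmul_eq_mul] at h4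
    push_cast at h4 ⊢
    have h5 : (0:ℝ) < 4 ^ n * 4 ^ n := by positivity
    refine le_of_mul_le_mul_left ?_ h5
    linarith
  obtain ⟨n, hn⟩ := exists_nat_gt (((p + q : ℕ) : ℝ) / (c * c') ^ 2)
  rw [div_lt_iff₀ (by positivity)] at hn
  exact absurd (main n) (not_le.2 hn)

lemma iter_cover (C : Set ℝ) (N : ℕ) (E : Finset ℝ) (L : ℝ)
    (hL : C ⊆ Set.Icc 0 L) (hN : 0 < N)
    (hC : ∀ x ∈ C, ∃ e ∈ E, ∃ y ∈ C, x = e + y / N) (k : ℕ) :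
    ∃ A : Finset ℝ, A.card ≤ E.card ^ k ∧ C ⊆ ⋃ a : A, Set.Icc (a : ℝ) (a + L / N ^ k) := by
  have hN' : (0:ℝ) < N := by exact_mod_cast hN
  induction k with
  | zero => exact ⟨{0}, by simp, by intro x hx; simpa using hL hx⟩
  | succ k ih =>
    obtain ⟨A, hA, hcov⟩ := ih
    classical
    refine ⟨(E ×ˢ A).image (fun z => z.1 + z.2 / N), ?_, ?_⟩
    · refine Finset.card_image_le.trans ?_
      rw [Finset.card_product, pow_succ']
      exact Nat.mul_le_mul_left _ hA
    · intro x hx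
      obtain ⟨e, he, y, hy, rfl⟩ := hC x hx
      obtain ⟨⟨a, ha⟩, hya⟩ := Set.mem_iUnion.1 (hcov hy)
      simp only [Set.mem_Icc] at hya
      refine Set.mem_iUnion.2 ⟨⟨e + a / N, Finset.mem_image.2 ⟨(e, a), by simp [he, ha], rfl⟩⟩, ?_⟩
      simp only [Set.mem_Icc]
      constructor
      · gcongr; exact hya.1
      · have : L / N ^ (k+1) = (L / N ^ k) / N := by rw [pow_succ, div_div]
        rw [this, add_assoc, ← add_div]
        gcongr
        exact hya.2

lemma dimH_lt_of_cover (C : Set ℝ) (N : ℕ) (E : Finset ℝ) (L : ℝ) (hL0 : 0 ≤ L)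
    (hL : C ⊆ Set.Icc 0 L) (hN : 2 ≤ N) (hE : E.card < N)
    (hC : ∀ x ∈ C, ∃ e ∈ E, ∃ y ∈ C, x = e + y / N) : dimH C < 1 := by
  have hN' : (1:ℝ) < N := by exact_mod_cast hN
  have hN0 : (0:ℝ) < N := by linarith
  obtain ⟨s, hs0, hs1, hsE⟩ : ∃ s : ℝ, 0 ≤ s ∧ s < 1 ∧ (E.card : ℝ) ≤ (N : ℝ) ^ s := by
    have hM1 : (1:ℝ) ≤ ((N - 1 : ℕ) : ℝ) := by exact_mod_cast (by omega : 1 ≤ N - 1)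
    refine ⟨Real.logb N ((N - 1 : ℕ) : ℝ), Real.logb_nonneg hN' hM1, ?_, ?_⟩
    · rw [Real.logb_lt_iff_lt_rpow hN' (by linarith), Real.rpow_one]
      exact_mod_cast (by omega : N - 1 < N)
    · rw [Real.rpow_logb hN0 hN'.ne' (by linarith)]
      exact_mod_cast (by omega : E.card ≤ N - 1)
  choose A hA hcov using iter_cover C N E L hL (by omega) hC
  have hfin : MeasureTheory.Measure.hausdorffMeasure s C ≤ ENNReal.ofReal (L ^ s) := by
    refine (MeasureTheory.Measure.hausdorffMeasure_le_liminf_sum (ι := fun k => A k) (l := atTop) s C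
      (fun k : ℕ => ENNReal.ofReal (L / N ^ k)) ?_
      (fun k a => Set.Icc (a : ℝ) (a + L / N ^ k)) ?_ ?_).trans ?_
    · rw [← ENNReal.ofReal_zero]
      refine ENNReal.tendsto_ofReal ?_
      exact tendsto_const_nhds.div_atTop (tendsto_pow_atTop_atTop_of_one_lt hN')
    · refine Eventually.of_forall fun k a => ?_
      rw [Real.ediam_Icc]; simp
    · exact Eventually.of_forall fun k => hcov k
    · refine liminf_le_of_frequently_le' (Eventually.of_forall fun k => ?_).frequently
      simp only [Real.ediam_Icc, add_sub_cancel_left, Finset.sum_const, Finset.card_univ,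
        Fintype.card_coe, nsmul_eq_mul]
      rw [ENNReal.ofReal_rpow_of_nonneg (by positivity) hs0, ← ENNReal.ofReal_natCast,
        ← ENNReal.ofReal_mul (by positivity)]
      apply ENNReal.ofReal_le_ofReal
      have h1 : ((A k).card : ℝ) ≤ ((N : ℝ) ^ s) ^ k := by
        calc ((A k).card : ℝ) ≤ (E.card : ℝ) ^ k := by exact_mod_cast hA k
          _ ≤ _ := by gcongr
      rw [Real.div_rpow hL0 (by positivity)]
      have h2 : ((N : ℝ) ^ k) ^ s = ((N : ℝ) ^ s) ^ k := by
        rw [← Real.rpow_natCast, ← Real.rpow_natCast, ← Real.rpow_mul hN0.le, ← Real.rpow_mul hN0.le, mul_comm]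
      rw [h2, mul_div_assoc', div_le_iff₀ (by positivity), mul_comm]
      gcongr
  lift s to NNReal using hs0
  have hd : dimH C ≤ (s : ENNReal) := by
    apply dimH_le_of_hausdorffMeasure_ne_top
    exact ne_top_of_le_ne_top ENNReal.ofReal_ne_top hfin
  refine hd.trans_lt ?_
  rw [← ENNReal.coe_one, ENNReal.coe_lt_coe]
  exact_mod_cast hs1

lemma omega_bd (t : ℝ) (ht : 0 ≤ t) (x : ℝ) (hx : x ∈ Omega t) : 0 ≤ x ∧ x ≤ 3 * t + 3 := by
  simp only [Omega, Set.mem_insert_iff, Set.mem_singleton_iff] at hx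
  rcases hx with rfl | rfl | rfl | rfl <;> constructor <;> linarith

lemma omega_dg (p q : ℕ) (hq : 0 < q) (x : ℝ) (hx : x ∈ Omega ((p:ℝ)/q)) :
    ∃ b, x = 3 / q * dg p q b := by
  have : (0:ℝ) < q := by exact_mod_cast hq
  simp only [Omega, Set.mem_insert_iff, Set.mem_singleton_iff] at hx
  rcases hx with rfl | rfl | rfl | rfl
  · exact ⟨(false, false), by simp [dg]⟩
  · exact ⟨(true, false), by simp [dg]; ring⟩
  · exact ⟨(false, true), by simp [dg]; field_simp⟩
  · exact ⟨(true, true), by simp [dg]; field_simp⟩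

lemma summ (t : ℝ) (ht : 0 ≤ t) (d : ℕ → ℝ) (hd : ∀ i, d i ∈ Omega t) :
    Summable (fun i : ℕ => d i / 4 ^ (i+1)) := by
  have hg : Summable (fun j : ℕ => (3 * t + 3) * (1/4 : ℝ) ^ j) :=
    (summable_geometric_of_lt_one (by norm_num) (by norm_num)).mul_left _
  refine Summable.of_nonneg_of_le (fun i => ?_) (fun i => ?_) hg
  · have := (omega_bd t ht _ (hd i)).1; positivity
  · have h := omega_bd t ht _ (hd i)
    rw [one_div, inv_pow, ← div_eq_mul_inv]
    apply div_le_div₀ (by linarith) h.2 (by positivity)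
    exact pow_le_pow_right₀ (by norm_num) (by omega)

theorem dimH_lt_one_of_overlap (p q : ℕ) (hp : 0 < p) (hpq : p < q)
    (hco : Nat.Coprime p q) (hpG : p ∉ Gamma) (hqG : q ∉ Gamma) :
    dimH (cornerC ((p : ℝ) / q)) < 1 := by
  classical
  have ht : (0:ℝ) ≤ (p:ℝ) / q := by positivity
  set t := (p:ℝ) / q with htdef
  obtain ⟨n, hn⟩ := exists_overlap p q hp hpG hqG
  have hn0 : n ≠ 0 := by
    rintro rfl
    exact hn (Function.injective_of_subsingleton _)
  set V := Finset.univ.image (wval p q n) with hV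
  have hVc : V.card < 4 ^ n := by
    have h1 : Fintype.card (Fin n → Bool × Bool) = 4 ^ n := by simp
    rw [← h1, ← Finset.card_univ]
    refine lt_of_le_of_ne Finset.card_image_le fun h => hn ?_
    have := Finset.card_image_iff.1 h
    simpa [Set.injOn_univ] using this
  refine dimH_lt_of_cover _ (4 ^ n) (V.image fun v : ℕ => 3 / (q:ℝ) * v / 4 ^ n)
    (∑' i : ℕ, (3 * t + 3) / 4 ^ (i+1)) ?_ ?_ ?_ ?_ ?_
  · exact tsum_nonneg fun i => by positivity
  · rintro x ⟨d, hd, rfl⟩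
    refine ⟨tsum_nonneg fun i => ?_, ?_⟩
    · have := (omega_bd t ht _ (hd i)).1; positivity
    · refine (summ t ht d hd).tsum_le_tsum (fun i => ?_)
        (summ t ht (fun _ => 3 * t + 3) fun i => by simp [Omega])
      have := (omega_bd t ht _ (hd i)).2
      gcongr
  · calc 2 ≤ 4 ^ 1 := by norm_num
      _ ≤ 4 ^ n := Nat.pow_le_pow_right (by norm_num) (by omega)
  · exact Finset.card_image_le.trans_lt hVc
  · rintro x ⟨d, hd, rfl⟩
    choose b hb using fun i => omega_dg p q (by omega) (d i) (hd i)
    refine ⟨_, Finset.mem_image_of_mem _ (Finset.mem_image_of_mem _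
      (Finset.mem_univ (fun i : Fin n => b (n - 1 - i)))),
      _, ⟨fun i => d (i + n), fun i => hd _, rfl⟩, ?_⟩
    rw [← (summ t ht d hd).sum_add_tsum_nat_add n]
    congr 1
    · rw [← Finset.sum_range_reflect, wval,
        Fin.sum_univ_eq_sum_range (fun i => 4 ^ i * dg p q (b (n - 1 - i)))]
      push_cast
      rw [Finset.mul_sum, Finset.sum_div]
      refine Finset.sum_congr rfl fun i hi => ?_
      rw [Finset.mem_range] at hi
      rw [hb]
      obtain ⟨r, rfl⟩ := Nat.exists_eq_add_of_le (Nat.succ_le_of_lt hi)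
      rw [show i.succ + r - 1 - i = r by omega, show i.succ + r = i + (r + 1) by omega,
        pow_add 4 i (r+1)]
      field_simp
    · push_cast
      rw [← tsum_div_const]
      refine tsum_congr fun i => ?_
      rw [div_div, ← pow_add]
      congr 2
      omega
end

section
/- If t ∈ (0,1) is irrational, then C_t has Lebesgue measure zero. -/
open Filter Topology MeasureTheory

def EE : ℕ → Finset ℤ
  | 0 => {0}
  | n+1 => (EE n).image (fun e => 4*e) ∪ (EE n).image (fun e => 4*e+1)

noncomputable def pp (t : ℝ) (e : ℤ × ℤ) : ℝ := 3*((e.1:ℝ)+t*e.2)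

def PP (n : ℕ) : Finset (ℤ × ℤ) := EE n ×ˢ EE n

lemma EE_card (n : ℕ) : (EE n).card ≤ 2^n := by
  induction n with
  | zero => simp [EE]
  | succ n ih =>
    have h1 := Finset.card_union_le ((EE n).image (fun e => 4*e)) ((EE n).image (fun e => 4*e+1))
    have h2 := Finset.card_image_le (s := EE n) (f := fun e => 4*e)
    have h3 := Finset.card_image_le (s := EE n) (f := fun e => 4*e+1)
    simp only [EE]
    rw [pow_succ]
    omega

lemma PP_card (n : ℕ) : (PP n).card ≤ 4^n := by
  have := EE_card n
  rw [PP, Finset.card_product]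
  calc _ ≤ 2^n * 2^n := Nat.mul_le_mul this this
    _ = 4^n := by rw [← mul_pow]; norm_num

lemma mem_EE_succ (n : ℕ) (x : ℤ) : x ∈ EE (n+1) ↔ ∃ e ∈ EE n, x = 4*e ∨ x = 4*e+1 := by
  simp only [EE, Finset.mem_union, Finset.mem_image]
  constructor
  · rintro (⟨e, he, rfl⟩ | ⟨e, he, rfl⟩)
    · exact ⟨e, he, Or.inl rfl⟩
    · exact ⟨e, he, Or.inr rfl⟩
  · rintro ⟨e, he, (rfl | rfl)⟩
    · exact Or.inl ⟨e, he, rfl⟩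
    · exact Or.inr ⟨e, he, rfl⟩

lemma EE_gap (m : ℕ) : ∀ n, ∀ e ∈ EE n, ∀ f ∈ EE n,
    3*|e-f| + 1 ≤ 4^m ∨ 2*4^m+1 ≤ 3*|e-f| := by
  induction m with
  | zero =>
    intro n e _ f _
    rcases eq_or_ne e f with h | h
    · left; simp [h]
    · right
      have : 0 < |e-f| := abs_pos.mpr (sub_ne_zero.mpr h)
      simp; omega
  | succ m ih =>
    intro n e he f hf
    cases n with
    | zero =>
      simp [EE] at he hf
      left; subst he hf
      have : (0:ℤ) < 4^(m+1) := by positivity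
      simp; omega
    | succ n =>
      obtain ⟨e', he', h1⟩ := (mem_EE_succ _ _).1 he
      obtain ⟨f', hf', h2⟩ := (mem_EE_succ _ _).1 hf
      have := ih n e' he' f' hf'
      rw [pow_succ]
      generalize (4:ℤ)^m = M at *
      rcases abs_cases (e-f) with h | h <;> rcases abs_cases (e'-f') with h' | h' <;> omega

lemma digit_bound {t : ℝ} (ht : t ∈ Set.Ioo (0:ℝ) 1) {x : ℝ} (hx : x ∈ Omega t) :
    0 ≤ x ∧ x ≤ 6 := by
  obtain ⟨h0, h1⟩ := ht
  simp only [Omega, Set.mem_insert_iff, Set.mem_singleton_iff] at hx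
  rcases hx with rfl | rfl | rfl | rfl <;> constructor <;> linarith

lemma hasSum_six : HasSum (fun i : ℕ => (6:ℝ)/4^(i+1)) 2 := by
  have := (hasSum_geometric_of_lt_one (r := (1/4:ℝ)) (by norm_num) (by norm_num)).mul_left (6/4)
  have h2 : (6/4 : ℝ) * (1 - 1/4)⁻¹ = 2 := by norm_num
  rw [h2] at this
  refine this.congr_fun (fun i => ?_)
  rw [pow_succ, one_div, inv_pow]; field_simp

lemma digit_summable {t : ℝ} (ht : t ∈ Set.Ioo (0:ℝ) 1) {d : ℕ → ℝ} (hd : ∀ i, d i ∈ Omega t) :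
    Summable (fun i : ℕ => d i / 4^(i+1)) := by
  refine Summable.of_nonneg_of_le (fun i => ?_) (fun i => ?_) hasSum_six.summable
  · have := (digit_bound ht (hd i)).1; positivity
  · have := (digit_bound ht (hd i)).2; gcongr

lemma C_sub {t : ℝ} (ht : t ∈ Set.Ioo (0:ℝ) 1) {x : ℝ} (hx : x ∈ cornerC t) : 0 ≤ x ∧ x ≤ 2 := by
  obtain ⟨d, hd, rfl⟩ := hx
  constructor
  · refine tsum_nonneg (fun i => ?_)
    have := (digit_bound ht (hd i)).1; positivity
  · rw [← hasSum_six.tsum_eq]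
    refine (digit_summable ht hd).tsum_le_tsum (fun i => ?_) hasSum_six.summable
    have := (digit_bound ht (hd i)).2; gcongr

lemma C_zero (t : ℝ) : (0:ℝ) ∈ cornerC t := ⟨fun _ => 0, fun _ => by simp [Omega], by simp⟩

lemma C_compact {t : ℝ} (ht : t ∈ Set.Ioo (0:ℝ) 1) : IsCompact (cornerC t) := by
  have hfin : (Omega t).Finite := by unfold Omega; exact Set.toFinite _
  have hc : IsCompact (Set.univ.pi (fun _ : ℕ => Omega t)) :=
    isCompact_univ_pi (fun _ => hfin.isCompact)
  have hcont : ContinuousOn (fun d : ℕ → ℝ => ∑' i, d i / 4^(i+1))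
      (Set.univ.pi (fun _ : ℕ => Omega t)) := by
    refine continuousOn_tsum (fun i => ?_) hasSum_six.summable (fun i d hd => ?_)
    · fun_prop
    · have := digit_bound ht (hd i trivial)
      rw [Real.norm_eq_abs, abs_of_nonneg (by have := this.1; positivity)]
      have := this.2; gcongr
  convert hc.image_of_continuousOn hcont using 1
  ext x
  simp only [cornerC, Set.mem_ofPred_eq, Set.mem_image, Set.mem_pi, Set.mem_univ, true_imp_iff]
  constructor
  · rintro ⟨d, h, rfl⟩; exact ⟨d, h, rfl⟩
  · rintro ⟨d, h, rfl⟩; exact ⟨d, h, rfl⟩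

lemma C_step {t : ℝ} (ht : t ∈ Set.Ioo (0:ℝ) 1) (x : ℝ) :
    x / 4 ∈ cornerC t ↔ ∃ w ∈ Omega t, x - w ∈ cornerC t := by
  constructor
  · rintro ⟨d, hd, h⟩
    refine ⟨d 0, hd 0, fun i => d (i+1), fun i => hd _, ?_⟩
    rw [(digit_summable ht hd).tsum_eq_zero_add] at h
    have : ∑' i : ℕ, d (i+1) / 4^(i+1+1) = (∑' i : ℕ, d (i+1) / 4^(i+1)) / 4 := by
      rw [← tsum_div_const]; congr 1; ext i; rw [pow_succ _ (i+1)]; field_simp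
    rw [this] at h
    simp at h
    linarith
  · rintro ⟨w, hw, d, hd, h⟩
    let d' : ℕ → ℝ := fun i => Nat.casesOn i w d
    have hd' : ∀ i, d' i ∈ Omega t := by
      intro i; cases i with
      | zero => exact hw
      | succ i => exact hd i
    refine ⟨d', hd', ?_⟩
    rw [(digit_summable ht hd').tsum_eq_zero_add]
    have : ∑' i : ℕ, d' (i+1) / 4^(i+1+1) = (∑' i : ℕ, d i / 4^(i+1)) / 4 := by
      rw [← tsum_div_const]; congr 1; ext i; rw [pow_succ _ (i+1)]; simp only [d']; field_simp
    rw [this, ← h]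
    simp [d']
    ring

lemma C_sim {t : ℝ} (ht : t ∈ Set.Ioo (0:ℝ) 1) (n : ℕ) : ∀ y : ℝ,
    y / 4^n ∈ cornerC t ↔ ∃ e ∈ PP n, y - pp t e ∈ cornerC t := by
  induction n with
  | zero => intro y; simp [PP, EE, pp]
  | succ n ih =>
    intro y
    rw [show y / 4^(n+1) = (y/4)/4^n by rw [pow_succ]; field_simp, ih]
    constructor
    · rintro ⟨e, he, h⟩
      rw [show y/4 - pp t e = (y - 4 * pp t e)/4 by ring, C_step ht] at h
      obtain ⟨w, hw, h⟩ := h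
      simp only [PP, Finset.mem_product] at he ⊢
      simp only [Omega, Set.mem_insert_iff, Set.mem_singleton_iff] at hw
      rcases hw with rfl | rfl | rfl | rfl
      · refine ⟨(4*e.1, 4*e.2), ⟨(mem_EE_succ _ _).2 ⟨_, he.1, Or.inl rfl⟩, (mem_EE_succ _ _).2 ⟨_, he.2, Or.inl rfl⟩⟩, ?_⟩
        convert h using 1; simp only [pp]; push_cast; ring
      · refine ⟨(4*e.1, 4*e.2+1), ⟨(mem_EE_succ _ _).2 ⟨_, he.1, Or.inl rfl⟩, (mem_EE_succ _ _).2 ⟨_, he.2, Or.inr rfl⟩⟩, ?_⟩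
        convert h using 1; simp only [pp]; push_cast; ring
      · refine ⟨(4*e.1+1, 4*e.2), ⟨(mem_EE_succ _ _).2 ⟨_, he.1, Or.inr rfl⟩, (mem_EE_succ _ _).2 ⟨_, he.2, Or.inl rfl⟩⟩, ?_⟩
        convert h using 1; simp only [pp]; push_cast; ring
      · refine ⟨(4*e.1+1, 4*e.2+1), ⟨(mem_EE_succ _ _).2 ⟨_, he.1, Or.inr rfl⟩, (mem_EE_succ _ _).2 ⟨_, he.2, Or.inr rfl⟩⟩, ?_⟩
        convert h using 1; simp only [pp]; push_cast; ring
    · rintro ⟨⟨a, b⟩, he, h⟩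
      simp only [PP, Finset.mem_product] at he ⊢
      obtain ⟨a', ha', h1⟩ := (mem_EE_succ _ _).1 he.1
      obtain ⟨b', hb', h2⟩ := (mem_EE_succ _ _).1 he.2
      refine ⟨(a', b'), ⟨ha', hb'⟩, ?_⟩
      rw [show y/4 - pp t (a',b') = (y - 4 * pp t (a',b'))/4 by ring, C_step ht]
      simp only [Omega, Set.mem_insert_iff, Set.mem_singleton_iff]
      rcases h1 with rfl | rfl <;> rcases h2 with rfl | rfl
      · refine ⟨0, by simp, ?_⟩
        convert h using 1; simp only [pp]; push_cast; ring
      · refine ⟨3*t, by simp, ?_⟩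
        convert h using 1; simp only [pp]; push_cast; ring
      · refine ⟨3, by simp, ?_⟩
        convert h using 1; simp only [pp]; push_cast; ring
      · refine ⟨3*t+3, by simp, ?_⟩
        convert h using 1; simp only [pp]; push_cast; ring

lemma slide_right {T : Set ℝ} {ι : Type*} [Fintype ι]
    (hreg : ∀ x ∈ T, ∀ U : Set ℝ, IsOpen U → x ∈ U → volume (T ∩ U) ≠ 0)
    {x y : ι → ℝ} {η l r P : ℝ} (hη : 0 < η) (hxy : ∀ i, |y i - x i| ≤ η)
    (hcx : ∀ z, l ≤ z → z ≤ r → ∃ i, z - x i ∈ T)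
    (hny : ∀ i j, i ≠ j → volume {z | z - y i ∈ T ∧ z - y j ∈ T} = 0)
    (hP : ∀ i, y i - x i ≤ P) (i0 : ι) (hi0 : y i0 - x i0 = P) {α : ℝ} (hlα : l ≤ α)
    (hα : ∀ z, α ≤ z → z ≤ α + 2*η → z - x i0 ∈ T) :
    ∀ z, α ≤ z → z ≤ r → ∃ i, y i - x i = P ∧ z - x i ∈ T := by
  classical
  -- gap
  have hq : ∃ q > 0, ∀ j, y j - x j ≠ P → y j - x j ≤ P - 2*q := by
    have : ∀ᶠ q in 𝓝[>] (0:ℝ), ∀ j, y j - x j ≠ P → y j - x j ≤ P - 2*q := by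
      rw [eventually_all]
      intro j
      by_cases h : y j - x j = P
      · simp [h]
      · have h' : y j - x j < P := lt_of_le_of_ne (hP j) h
        have : Set.Ioo (0:ℝ) ((P - (y j - x j))/2) ∈ 𝓝[>] (0:ℝ) :=
          Ioo_mem_nhdsGT (by linarith)
        filter_upwards [this] with q hq _
        linarith [hq.2]
    obtain ⟨q, h1, h2⟩ := (this.and self_mem_nhdsWithin).exists
    exact ⟨q, h2, h1⟩
  obtain ⟨q, hq0, hq⟩ := hq
  have key : ∀ k : ℕ, ∀ z, α ≤ z → z ≤ r → z ≤ α + 2*η + k*q →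
      ∃ i, y i - x i = P ∧ z - x i ∈ T := by
    intro k
    induction k with
    | zero =>
      intro z h1 _ h3
      exact ⟨i0, hi0, hα z h1 (by simpa using h3)⟩
    | succ k ih =>
      intro z h1 h2 h3
      push_cast at h3
      by_cases hz : z ≤ α + 2*η + k*q
      · exact ih z h1 h2 hz
      push Not at hz
      obtain ⟨j, hj⟩ := hcx z (hlα.trans h1) h2
      by_cases hjP : y j - x j = P
      · exact ⟨j, hjP, hj⟩
      exfalso
      have hjq := hq j hjP
      set β := α + 2*η + k*q with hβ
      have hkq : 0 ≤ k*q := by positivity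
      -- the point z + p_j lies in the interval
      set U : Set ℝ := Set.Ioo (α + P - y j) (β + P - y j) with hU
      have a1 := abs_le.1 (hxy j)
      have a2 := abs_le.1 (hxy i0)
      have hzU : z - x j ∈ U := by
        constructor <;> linarith
      have hpos := hreg _ hj U isOpen_Ioo hzU
      apply hpos
      have hsub : T ∩ U ⊆ ⋃ i : {i // i ≠ j}, (fun w => w + y j) ⁻¹' {z | z - y i ∈ T ∧ z - y j ∈ T} := by
        rintro w ⟨hw, hwU⟩
        obtain ⟨i, hi, hi'⟩ := ih (w + y j - P) (by linarith [hwU.1]) (by linarith [hwU.2]) (by linarith [hwU.2])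
        refine Set.mem_iUnion.2 ⟨⟨i, fun h => hjP (h ▸ hi)⟩, ?_, ?_⟩
        · show w + y j - y i ∈ T
          convert hi' using 1; linarith
        · show w + y j - y j ∈ T
          simpa using hw
      refine measure_mono_null hsub (measure_iUnion_null fun i => ?_)
      rw [measure_preimage_add_right]
      exact hny _ _ i.2
  intro z h1 h2
  obtain ⟨k, hk⟩ := exists_nat_ge ((z - α)/q)
  rw [div_le_iff₀ hq0] at hk
  exact key k z h1 h2 (by linarith)

lemma slide {T : Set ℝ} {ι : Type*} [Fintype ι]
    (hreg : ∀ x ∈ T, ∀ U : Set ℝ, IsOpen U → x ∈ U → volume (T ∩ U) ≠ 0)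
    {x y : ι → ℝ} {η l r : ℝ} (hη : 0 < η) (hxy : ∀ i, |y i - x i| ≤ η)
    (hcx : ∀ z, l ≤ z → z ≤ r → ∃ i, z - x i ∈ T)
    (hcy : ∀ z, l ≤ z → z ≤ r → ∃ i, z - y i ∈ T)
    (hnx : ∀ i j, i ≠ j → volume {z | z - x i ∈ T ∧ z - x j ∈ T} = 0)
    (hny : ∀ i j, i ≠ j → volume {z | z - y i ∈ T ∧ z - y j ∈ T} = 0)
    (hix : ∀ i, ∃ α, l ≤ α ∧ α + 5*η ≤ r ∧ ∀ z, α ≤ z → z ≤ α + 2*η → z - x i ∈ T)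
    (hiy : ∀ i, ∃ α, l ≤ α ∧ α + 5*η ≤ r ∧ ∀ z, α ≤ z → z ≤ α + 2*η → z - y i ∈ T) :
    ∀ i j, y i - x i = y j - x j := by
  intro i j
  have : Nonempty ι := ⟨i⟩
  obtain ⟨a, ha⟩ := Finite.exists_max (fun i => y i - x i)
  obtain ⟨b, hb⟩ := Finite.exists_max (fun i => x i - y i)
  obtain ⟨α, h1, h2, h3⟩ := hix a
  obtain ⟨β, g1, g2, g3⟩ := hiy b
  have A := slide_right hreg hη hxy hcx hny ha a rfl h1 h3
  have B := slide_right hreg hη (fun i => by rw [abs_sub_comm]; exact hxy i) hcy hnx hb b rfl g1 g3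
  have a1 := abs_le.1 (hxy a)
  by_cases hab : y a - x a = y b - x b
  · have := ha i; have := ha j; have := hb i; have := hb j
    linarith
  exfalso
  set P := y a - x a with hP
  have hlt : max (α + P) β < min (r + P) r := by
    rw [max_lt_iff, lt_min_iff, lt_min_iff]
    refine ⟨⟨?_, ?_⟩, ?_, ?_⟩ <;> linarith
  have hv : volume (Set.Ioo (max (α + P) β) (min (r + P) r)) ≠ 0 := by
    rw [Real.volume_Ioo]
    exact (ENNReal.ofReal_pos.2 (sub_pos.2 hlt)).ne'
  apply hv
  have hsub : Set.Ioo (max (α + P) β) (min (r + P) r) ⊆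
      ⋃ p : {p : ι × ι // p.1 ≠ p.2}, {z | z - y p.1.1 ∈ T ∧ z - y p.1.2 ∈ T} := by
    intro z hz
    obtain ⟨hz1, hz2⟩ := hz
    rw [max_lt_iff] at hz1
    rw [lt_min_iff] at hz2
    obtain ⟨i, hi, hi'⟩ := A (z - P) (by linarith) (by linarith)
    obtain ⟨j, hj, hj'⟩ := B z (by linarith) (by linarith)
    refine Set.mem_iUnion.2 ⟨⟨(i, j), ?_⟩, ?_, hj'⟩
    · rintro h
      simp only at h
      subst h
      apply hab; linarith
    · show z - y i ∈ T
      convert hi' using 1; linarith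
  refine measure_mono_null hsub (measure_iUnion_null fun p => hny _ _ p.2)

lemma vol_shift (T : Set ℝ) (c : ℝ) : volume {z | z - c ∈ T} = volume T := by
  have : {z | z - c ∈ T} = (fun z => z + (-c)) ⁻¹' T := by
    ext z; simp [sub_eq_add_neg]
  rw [this, measure_preimage_add_right]

lemma C_meas {t : ℝ} (ht : t ∈ Set.Ioo (0:ℝ) 1) (c : ℝ) :
    MeasurableSet {z | z - c ∈ cornerC t} :=
  (C_compact ht).measurableSet.preimage (measurable_id.sub_const c)

lemma C_null {t : ℝ} (ht : t ∈ Set.Ioo (0:ℝ) 1) (n : ℕ) {e f : ℤ × ℤ} (he : e ∈ PP n)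
    (hf : f ∈ PP n) (hef : e ≠ f) :
    volume {z | z - pp t e ∈ cornerC t ∧ z - pp t f ∈ cornerC t} = 0 := by
  classical
  set T := cornerC t with hT
  set V := volume T with hV
  have hVfin : V ≠ ⊤ := (C_compact ht).measure_lt_top.ne
  let S : ℤ × ℤ → Set ℝ := fun e => {z | z - pp t e ∈ T}
  have hS : ∀ e, volume (S e) = V := fun e => vol_shift T _
  have hbig : volume {y : ℝ | y / 4^n ∈ T} = 4^n * V := by
    have : {y : ℝ | y / 4^n ∈ T} = (fun y => ((4:ℝ)^n)⁻¹ * y) ⁻¹' T := by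
      ext y; simp [div_eq_inv_mul]
    rw [this, Real.volume_preimage_mul_left (by positivity), inv_inv,
      abs_of_nonneg (by positivity), ENNReal.ofReal_pow (by norm_num)]
    norm_num
    rfl
  have hcov : {y : ℝ | y / 4^n ∈ T} ⊆ (S e ∪ S f) ∪ ⋃ g ∈ ((PP n).erase e).erase f, S g := by
    intro y hy
    obtain ⟨g, hg, h⟩ := (C_sim ht n y).1 hy
    by_cases h1 : g = e
    · left; left; subst h1; exact h
    by_cases h2 : g = f
    · left; right; subst h2; exact h
    right
    refine Set.mem_biUnion (x := g) ?_ h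
    simp [h1, h2, hg]
  have hle := (measure_mono hcov).trans (measure_union_le (μ := volume) _ _)
  have h2 : volume (⋃ g ∈ ((PP n).erase e).erase f, S g) ≤ (((PP n).erase e).erase f).card * V := by
    refine (measure_biUnion_finset_le _ _).trans ?_
    simp [hS]
  have h3 := measure_union_add_inter (μ := volume) (S e) (C_meas ht (pp t f))
  change volume (S e ∪ S f) + volume (S e ∩ S f) = volume (S e) + volume (S f) at h3
  rw [hS, hS] at h3
  change volume (S e ∩ S f) = 0
  have hc : (((PP n).erase e).erase f).card + 2 ≤ 4^n := by
    rw [Finset.card_erase_of_mem (by simp [hf, hef.symm]), Finset.card_erase_of_mem he]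
    have := PP_card n
    have h : 1 < (PP n).card := Finset.one_lt_card.2 ⟨e, he, f, hf, hef⟩
    omega
  rw [hbig] at hle
  set m := (((PP n).erase e).erase f).card
  have hc' : ((m : ENNReal) + 2) ≤ 4^n := by exact_mod_cast hc
  have h5 : 4^n * V + volume (S e ∩ S f) ≤ 4^n * V + 0 := by
    calc 4^n * V + volume (S e ∩ S f)
        ≤ (volume (S e ∪ S f) + m * V) + volume (S e ∩ S f) := by
          gcongr
          exact hle.trans (by gcongr)
      _ = (V + V) + m * V := by rw [← h3]; ring
      _ = (m + 2) * V := by ring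
      _ ≤ 4^n * V := by gcongr
      _ = _ := by simp
  have h6 := (ENNReal.add_le_add_iff_left (ENNReal.mul_ne_top (by simp) hVfin)).1 h5
  exact le_antisymm h6 (zero_le)

lemma C_copy {t : ℝ} (ht : t ∈ Set.Ioo (0:ℝ) 1) {x ρ : ℝ} (hx : x ∈ cornerC t) (hρ : 0 < ρ) :
    ∃ (n : ℕ) (c : ℝ), ∀ s ∈ cornerC t, (s + c)/4^n ∈ cornerC t ∧ |(s+c)/4^n - x| < ρ := by
  obtain ⟨n, hn⟩ := pow_unbounded_of_one_lt (2/ρ) (by norm_num : (1:ℝ) < 4)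
  have h4 : (0:ℝ) < 4^n := by positivity
  have : (4^n * x) / 4^n ∈ cornerC t := by rwa [mul_div_cancel_left₀ _ h4.ne']
  obtain ⟨e, he, h⟩ := (C_sim ht n _).1 this
  refine ⟨n, pp t e, fun s hs => ⟨(C_sim ht n _).2 ⟨e, he, by simpa using hs⟩, ?_⟩⟩
  have h1 := C_sub ht hs
  have h2 := C_sub ht h
  have : (s + pp t e)/4^n - x = (s + pp t e - 4^n*x)/4^n := by field_simp
  rw [this, abs_div, abs_of_pos h4, div_lt_iff₀ h4]
  rw [div_lt_iff₀ hρ] at hn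
  refine lt_of_le_of_lt (b := 2) ?_ (by linarith)
  rw [abs_le]; constructor <;> linarith

lemma C_reg {t : ℝ} (ht : t ∈ Set.Ioo (0:ℝ) 1) (hV : volume (cornerC t) ≠ 0) :
    ∀ x ∈ cornerC t, ∀ U : Set ℝ, IsOpen U → x ∈ U → volume (cornerC t ∩ U) ≠ 0 := by
  intro x hx U hU hxU h0
  obtain ⟨ρ, hρ, hb⟩ := Metric.isOpen_iff.1 hU x hxU
  obtain ⟨n, c, h⟩ := C_copy ht hx hρ
  apply hV
  have hsub : cornerC t ⊆ (fun s => s + c) ⁻¹' ((fun s => ((4:ℝ)^n)⁻¹ * s) ⁻¹' (cornerC t ∩ U)) := by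
    intro s hs
    have := h s hs
    simp only [Set.mem_preimage]
    rw [← div_eq_inv_mul]
    exact ⟨this.1, hb (by simpa [Real.dist_eq] using this.2)⟩
  refine measure_mono_null hsub ?_
  rw [measure_preimage_add_right, Real.volume_preimage_mul_left (by positivity), h0, mul_zero]

lemma C_count {t : ℝ} (ht : t ∈ Set.Ioo (0:ℝ) 1) (hV : volume (cornerC t) ≠ 0) :
    ∃ N : ℕ, ∀ (n : ℕ) (c : ℝ),
      ((PP n).filter (fun e => c ≤ pp t e ∧ pp t e ≤ c + 22)).card ≤ N := by
  have hVfin : volume (cornerC t) ≠ ⊤ := (C_compact ht).measure_lt_top.ne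
  have hdiv : (24:ENNReal) / volume (cornerC t) ≠ ⊤ := ENNReal.div_ne_top (by norm_num) hV
  obtain ⟨N, hN⟩ := ENNReal.exists_nat_gt hdiv
  refine ⟨N, fun n c => ?_⟩
  set Q := (PP n).filter (fun e => c ≤ pp t e ∧ pp t e ≤ c + 22) with hQ
  have h1 : volume (⋃ e ∈ Q, {z | z - pp t e ∈ cornerC t}) = ∑ e ∈ Q, volume {z | z - pp t e ∈ cornerC t} := by
    refine measure_biUnion_finset₀ ?_ (fun e _ => (C_meas ht _).nullMeasurableSet)
    intro e he f hf hef
    exact C_null ht n (Finset.mem_filter.1 he).1 (Finset.mem_filter.1 hf).1 hef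
  have h2 : volume (⋃ e ∈ Q, {z | z - pp t e ∈ cornerC t}) ≤ volume (Set.Icc c (c+24)) := by
    refine measure_mono (Set.iUnion₂_subset fun e he z hz => ?_)
    have h3 := (Finset.mem_filter.1 he).2
    have h4 := C_sub ht hz
    constructor <;> linarith
  rw [h1, Real.volume_Icc] at h2
  simp only [vol_shift, Finset.sum_const, nsmul_eq_mul] at h2
  have h3 : (Q.card : ENNReal) ≤ 24 / volume (cornerC t) := by
    rw [ENNReal.le_div_iff_mul_le (Or.inl hV) (Or.inl hVfin)]
    refine h2.trans ?_
    simp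
  exact_mod_cast h3.trans hN.le

lemma enum_pad (Q : Finset ℝ) (N : ℕ) (hQ : Q.card ≤ N) (hb : ∀ x ∈ Q, x ∈ Set.Icc (-12:ℝ) 10) :
    ∃ f : Fin N → ℝ, (∀ i, f i ∈ Set.Icc (-12:ℝ) 10) ∧ ∀ x ∈ Q, ∃ i, f i = x := by
  classical
  refine ⟨fun i => if h : (i:ℕ) < Q.card then (Q.equivFin.symm ⟨i, h⟩ : ℝ) else 0, ?_, ?_⟩
  · intro i
    dsimp only
    split_ifs with h
    · exact hb _ (Q.equivFin.symm ⟨i, h⟩).2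
    · norm_num
  · intro x hx
    have hlt := (Q.equivFin ⟨x, hx⟩).2
    refine ⟨⟨Q.equivFin ⟨x, hx⟩, lt_of_lt_of_le hlt hQ⟩, ?_⟩
    simp

lemma C_interior {t : ℝ} (ht : t ∈ Set.Ioo (0:ℝ) 1) (hV : volume (cornerC t) ≠ 0) :
    ∃ u l : ℝ, 0 < l ∧ ∀ z, u ≤ z → z ≤ u + l → z ∈ cornerC t := by
  classical
  by_contra! H
  obtain ⟨N, hN⟩ := C_count ht hV
  have hclosed := (C_compact ht).isClosed
  -- density point
  have hdens := Besicovitch.ae_tendsto_measure_inter_div (volume : Measure ℝ) (cornerC t)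
  have hne : (ae (volume.restrict (cornerC t))).NeBot := by
    rw [ae_neBot]; simpa using hV
  obtain ⟨x, hx⟩ := hdens.exists
  have hr : Tendsto (fun n : ℕ => ((1/4:ℝ))^n) atTop (𝓝[>] 0) := by
    rw [tendsto_nhdsWithin_iff]
    exact ⟨tendsto_pow_atTop_nhds_zero_of_lt_one (by norm_num) (by norm_num),
      Eventually.of_forall fun n => by simp⟩
  have hlim := hx.comp hr
  -- positions
  have hf : ∀ n : ℕ, ∃ f : Fin N → ℝ, (∀ i, f i ∈ Set.Icc (-12:ℝ) 10) ∧
      ∀ z, -1 ≤ z → z ≤ 1 → x + z / 4^n ∈ cornerC t → ∃ i, z - f i ∈ cornerC t := by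
    intro n
    have h4 : (0:ℝ) < 4^n := by positivity
    obtain ⟨f, h1, h2⟩ := enum_pad
      (((PP n).filter (fun e => 4^n*x-12 ≤ pp t e ∧ pp t e ≤ 4^n*x-12 + 22)).image
        (fun e => pp t e - 4^n*x)) N (Finset.card_image_le.trans (hN n _)) (by
          intro y hy
          obtain ⟨e, he, rfl⟩ := Finset.mem_image.1 hy
          have := (Finset.mem_filter.1 he).2
          constructor <;> linarith)
    refine ⟨f, h1, fun z hz1 hz2 hz => ?_⟩
    rw [show x + z/4^n = (4^n*x+z)/4^n by field_simp, C_sim ht] at hz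
    obtain ⟨e, he, h⟩ := hz
    have := C_sub ht h
    obtain ⟨i, hi⟩ := h2 (pp t e - 4^n*x) (Finset.mem_image.2 ⟨e, Finset.mem_filter.2
      ⟨he, by linarith, by linarith⟩, rfl⟩)
    refine ⟨i, ?_⟩
    rw [hi]; convert h using 1; ring
  choose f hf1 hf2 using hf
  have hcomp : IsCompact (Set.univ.pi (fun _ : Fin N => Set.Icc (-12:ℝ) 10)) :=
    isCompact_univ_pi (fun _ => isCompact_Icc)
  obtain ⟨y, -, φ, hφ, hy⟩ := hcomp.tendsto_subseq (x := f) (fun n i _ => hf1 n i)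
  -- hole
  have hopen : ∀ i, IsOpen {z | z - y i ∉ cornerC t} := fun i =>
    hclosed.isOpen_compl.preimage (continuous_id.sub continuous_const)
  have hdense : Dense (⋂ i, {z | z - y i ∉ cornerC t}) := by
    refine dense_iInter_of_isOpen hopen (fun i => ?_)
    rw [Metric.dense_iff]
    intro z r hr
    obtain ⟨w, h1, h2, h3⟩ := H (z - y i) (r/2) (by positivity)
    refine ⟨w + y i, ?_, ?_⟩
    · rw [Metric.mem_ball, Real.dist_eq, abs_lt]; constructor <;> linarith
    · show w + y i - y i ∉ cornerC t
      simpa using h3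
  obtain ⟨z0, hz0, hz0'⟩ := hdense.inter_open_nonempty (Set.Ioo (-1) 1) isOpen_Ioo ⟨0, by norm_num⟩
  have hO : IsOpen ((⋂ i, {z | z - y i ∉ cornerC t}) ∩ Set.Ioo (-1) 1) :=
    (isOpen_iInter_of_finite hopen).inter isOpen_Ioo
  obtain ⟨ρ, hρ, hball⟩ := Metric.isOpen_iff.1 hO z0 ⟨hz0', hz0⟩
  have hclose : ∀ᶠ k in atTop, ∀ i, |f (φ k) i - y i| < ρ/2 := by
    rw [eventually_all]
    intro i
    have := (tendsto_pi_nhds.1 hy i)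
    have := (Metric.tendsto_nhds.1 this) (ρ/2) (by positivity)
    simpa [Real.dist_eq] using this
  set σ := ρ/2 with hσ
  have hσ0 : 0 < σ := by positivity
  have hin : ∀ z, |z - z0| < ρ → (-1 < z ∧ z < 1) ∧ ∀ i, z - y i ∉ cornerC t := by
    intro z hz
    have := hball (show z ∈ Metric.ball z0 ρ by simpa [Real.dist_eq] using hz)
    exact ⟨this.2, fun i => Set.mem_iInter.1 this.1 i⟩
  have hbdd : ∀ᶠ k in atTop, volume (cornerC t ∩ Metric.closedBall x ((1/4:ℝ)^(φ k))) /
      volume (Metric.closedBall x ((1/4:ℝ)^(φ k))) ≤ ENNReal.ofReal (1-σ) := by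
    filter_upwards [hclose] with k hk
    set n := φ k
    set r := (1/4:ℝ)^n with hrdef
    have hr0 : 0 < r := by positivity
    have h4 : (0:ℝ) < 4^n := by positivity
    have hr4 : r * 4^n = 1 := by rw [hrdef, ← mul_pow]; norm_num
    have hsub : cornerC t ∩ Metric.closedBall x r ⊆
        Set.Icc (x - r) (x + (z0 - σ)*r) ∪ Set.Icc (x + (z0+σ)*r) (x + r) := by
      rintro w ⟨hw, hwb⟩
      rw [Real.closedBall_eq_Icc] at hwb
      by_contra hcon
      rw [Set.mem_union, not_or] at hcon
      have c1 : x + (z0 - σ)*r < w := by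
        by_contra h; exact hcon.1 ⟨hwb.1, by linarith⟩
      have c2 : w < x + (z0+σ)*r := by
        by_contra h; exact hcon.2 ⟨by linarith, hwb.2⟩
      have hz : w = x + ((w-x)*4^n)/4^n := by field_simp; ring
      set z := (w-x)*4^n with hzdef
      have hwr : w = x + z*r := by
        rw [hzdef, mul_assoc, mul_comm _ r, hr4]; ring
      have d1 : z0 - σ < z := by
        by_contra! h
        have := mul_le_mul_of_nonneg_right h hr0.le
        linarith
      have d2 : z < z0 + σ := by
        by_contra! h
        have := mul_le_mul_of_nonneg_right h hr0.le
        linarith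
      have hz1 := (hin z (by rw [abs_lt]; constructor <;> linarith)).1
      obtain ⟨i, hi⟩ := hf2 n z hz1.1.le hz1.2.le (hz ▸ hw)
      have hki := abs_lt.1 (hk i)
      refine (hin (z - f n i + y i) (by rw [abs_lt]; constructor <;> linarith)).2 i ?_
      convert hi using 1; ring
    have hzl := (hin (z0 - σ) (by rw [abs_lt]; constructor <;> linarith)).1
    have hzr := (hin (z0 + σ) (by rw [abs_lt]; constructor <;> linarith)).1
    have hv : volume (cornerC t ∩ Metric.closedBall x r) ≤ ENNReal.ofReal ((1-σ)*(2*r)) := by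
      refine (measure_mono hsub).trans ((measure_union_le _ _).trans ?_)
      rw [Real.volume_Icc, Real.volume_Icc, ← ENNReal.ofReal_add]
      · apply ENNReal.ofReal_le_ofReal; nlinarith
      · nlinarith
      · nlinarith
    rw [Real.volume_closedBall]
    refine ENNReal.div_le_of_le_mul ?_
    rwa [← ENNReal.ofReal_mul (by linarith)]
  have hle := le_of_tendsto (hlim.comp hφ.tendsto_atTop) hbdd
  have : ENNReal.ofReal (1-σ) < 1 := by
    rw [ENNReal.ofReal_lt_one]; linarith
  exact absurd hle (not_le.2 this)

lemma C_jump {t : ℝ} (ht : t ∈ Set.Ioo (0:ℝ) 1) {u l : ℝ} (hl : 0 < l)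
    (hI : ∀ z, u ≤ z → z ≤ u + l → z ∈ cornerC t) (K : ℕ) :
    ∃ n : ℕ, ∃ d ∈ PP n, ∃ d' ∈ PP n, 1 ≤ pp t d' - pp t d ∧ pp t d' - pp t d ≤ 3 ∧
      (∀ z, -10 ≤ z → z ≤ 10 → (pp t d + z) / 4^n ∈ cornerC t) ∧
      ((K:ℤ) ≤ |d'.1 - d.1| ∨ (K:ℤ) ≤ |d'.2 - d.2|) := by
  classical
  obtain ⟨m, hm⟩ : ∃ m : ℕ, (3*K:ℤ) ≤ 4^m := by
    refine ⟨K+1, ?_⟩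
    have h : K < 4^K := Nat.lt_pow_self (by norm_num)
    have h' : (K:ℤ) < 4^K := by exact_mod_cast h
    rw [pow_succ]; linarith
  obtain ⟨n, hn⟩ := pow_unbounded_of_one_lt ((2*4^m+100)/l) (by norm_num : (1:ℝ) < 4)
  rw [div_lt_iff₀ hl] at hn
  have h4 : (0:ℝ) < 4^n := by positivity
  have hm4 : (0:ℝ) < 4^m := by positivity
  have hW : ∀ y, 4^n*u ≤ y → y ≤ 4^n*u + 4^n*l → y/4^n ∈ cornerC t := by
    intro y h1 h2
    apply hI
    · rw [le_div_iff₀ h4]; linarith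
    · rw [div_le_iff₀ h4]; linarith
  obtain ⟨d0, hd0, h0⟩ := (C_sim ht n _).1 (hW (4^n*u+20) (by linarith) (by linarith))
  have h0' := C_sub ht h0
  let S := (PP n).filter (fun e => 3*|e.1-d0.1|+1 ≤ 4^m ∧ 3*|e.2-d0.2|+1 ≤ 4^m)
  have hm1 : (1:ℤ) ≤ 4^m := one_le_pow₀ (by norm_num)
  have hS : S.Nonempty := ⟨d0, Finset.mem_filter.2 ⟨hd0, by simpa using hm1, by simpa using hm1⟩⟩
  obtain ⟨d, hdS, hmax⟩ := S.exists_max_image (pp t) hS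
  obtain ⟨hd, hda, hdb⟩ := Finset.mem_filter.1 hdS
  have hge := hmax d0 (Finset.mem_filter.2 ⟨hd0, by simpa using hm1, by simpa using hm1⟩)
  have hle : pp t d - pp t d0 ≤ 2*4^m := by
    have a1 : (3*|(d.1:ℝ)-d0.1|+1) ≤ 4^m := by exact_mod_cast hda
    have a2 : (3*|(d.2:ℝ)-d0.2|+1) ≤ 4^m := by exact_mod_cast hdb
    have b1 := le_abs_self ((d.1:ℝ)-d0.1)
    have b2 := le_abs_self ((d.2:ℝ)-d0.2)
    have b3 := abs_nonneg ((d.2:ℝ)-d0.2)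
    have : pp t d - pp t d0 = 3*((d.1:ℝ)-d0.1) + 3*(t*((d.2:ℝ)-d0.2)) := by simp only [pp]; ring
    have c : t*((d.2:ℝ)-d0.2) ≤ |(d.2:ℝ)-d0.2| := by
      have := mul_le_mul_of_nonneg_left b2 ht.1.le
      have := mul_le_mul_of_nonneg_right ht.2.le b3
      linarith
    linarith
  obtain ⟨d', hd', h'⟩ := (C_sim ht n _).1 (hW (pp t d + 3) (by linarith) (by linarith))
  have h'' := C_sub ht h'
  refine ⟨n, d, hd, d', hd', by linarith, by linarith, ?_, ?_⟩
  · intro z h1 h2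
    exact hW _ (by linarith) (by linarith)
  · have hnS : d' ∉ S := fun h => by have := hmax d' h; linarith
    simp only [PP, Finset.mem_product] at hd' hd0
    have g1 := EE_gap m n _ hd'.1 _ hd0.1
    have g2 := EE_gap m n _ hd'.2 _ hd0.2
    have : ¬ (3*|d'.1-d0.1|+1 ≤ 4^m ∧ 3*|d'.2-d0.2|+1 ≤ 4^m) := fun h =>
      hnS (Finset.mem_filter.2 ⟨Finset.mem_product.2 hd', h⟩)
    have t1 := abs_sub_le d'.1 d.1 d0.1
    have t2 := abs_sub_le d'.2 d.2 d0.2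
    omega

def Cfg (t : ℝ) (m : ℕ) (i0 i1 : Fin m) (K : ℕ) : Prop :=
  ∃ (n : ℕ) (g : Fin m → ℤ × ℤ), Function.Injective g ∧ (∀ i, g i ∈ PP n) ∧
    (∀ i, pp t (g i) - pp t (g i0) ∈ Set.Icc (-12:ℝ) 10) ∧
    (∀ z, -10 ≤ z → z ≤ 10 → ∃ i, z - (pp t (g i) - pp t (g i0)) ∈ cornerC t) ∧
    (1 ≤ pp t (g i1) - pp t (g i0) ∧ pp t (g i1) - pp t (g i0) ≤ 3) ∧
    ((K:ℤ) ≤ |(g i1).1 - (g i0).1| ∨ (K:ℤ) ≤ |(g i1).2 - (g i0).2|)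

lemma Cfg_mono {t : ℝ} {m : ℕ} {i0 i1 : Fin m} {K K' : ℕ} (h : K ≤ K') (hc : Cfg t m i0 i1 K') :
    Cfg t m i0 i1 K := by
  obtain ⟨n, g, h1, h2, h3, h4, h5, h6⟩ := hc
  exact ⟨n, g, h1, h2, h3, h4, h5, by omega⟩

lemma exists_Cfg {t : ℝ} (ht : t ∈ Set.Ioo (0:ℝ) 1) (hV : volume (cornerC t) ≠ 0) :
    ∃ m, ∃ i0 i1 : Fin m, ∀ K, Cfg t m i0 i1 K := by
  classical
  obtain ⟨u, l, hl, hI⟩ := C_interior ht hV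
  obtain ⟨N, hN⟩ := C_count ht hV
  have h1 : ∀ K, ∃ p : (Σ m : Fin (N+1), Fin m × Fin m), Cfg t p.1 p.2.1 p.2.2 K := by
    intro K
    obtain ⟨n, d, hd, d', hd', a1, a2, a3, a4⟩ := C_jump ht hl hI K
    set Q := (PP n).filter (fun e => pp t d - 12 ≤ pp t e ∧ pp t e ≤ pp t d - 12 + 22) with hQ
    have hcard := hN n (pp t d - 12)
    have hdQ : d ∈ Q := Finset.mem_filter.2 ⟨hd, by linarith, by linarith⟩
    have hdQ' : d' ∈ Q := Finset.mem_filter.2 ⟨hd', by linarith, by linarith⟩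
    refine ⟨⟨⟨Q.card, Nat.lt_succ_of_le hcard⟩, Q.equivFin ⟨d, hdQ⟩, Q.equivFin ⟨d', hdQ'⟩⟩, n,
      fun i => (Q.equivFin.symm i : ℤ × ℤ), ?_, ?_, ?_, ?_, ?_, ?_⟩
    · exact Subtype.val_injective.comp Q.equivFin.symm.injective
    · intro i
      exact (Finset.mem_filter.1 (Q.equivFin.symm i).2).1
    · intro i
      have := (Finset.mem_filter.1 (Q.equivFin.symm i).2).2
      simp only [Equiv.symm_apply_apply]
      constructor <;> linarith
    · intro z z1 z2
      obtain ⟨e, he, h⟩ := (C_sim ht n _).1 (a3 z z1 z2)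
      have hs := C_sub ht h
      have heQ : e ∈ Q := Finset.mem_filter.2 ⟨he, by linarith, by linarith⟩
      refine ⟨Q.equivFin ⟨e, heQ⟩, ?_⟩
      simp only [Equiv.symm_apply_apply]
      convert h using 1; ring
    · simp only [Equiv.symm_apply_apply]
      exact ⟨a1, a2⟩
    · simp only [Equiv.symm_apply_apply]
      exact a4
  have h2 : ∃ p : (Σ m : Fin (N+1), Fin m × Fin m), ∀ K, Cfg t p.1 p.2.1 p.2.2 K := by
    by_contra! hcon
    choose k hk using hcon
    obtain ⟨p, hp⟩ := h1 (Finset.univ.sup k)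
    exact hk p (Cfg_mono (Finset.le_sup (Finset.mem_univ p)) hp)
  obtain ⟨⟨m, i0, i1⟩, h⟩ := h2
  exact ⟨m, i0, i1, h⟩

lemma pp_inj {t : ℝ} (hirr : Irrational t) {a b c d : ℤ}
    (h : (a:ℝ) + t * b = c + t * d) : a = c ∧ b = d := by
  have hb : b = d := by
    by_contra hbd
    have hbd' : ((b - d : ℤ) : ℝ) ≠ 0 := by exact_mod_cast sub_ne_zero.2 hbd
    apply hirr
    refine ⟨((c - a : ℤ) : ℚ) / ((b - d : ℤ) : ℚ), ?_⟩
    push_cast at hbd' ⊢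
    rw [div_eq_iff hbd']
    linarith
  subst hb
  refine ⟨?_, rfl⟩
  have : (a:ℝ) = c := by linarith
  exact_mod_cast this

theorem measure_zero_of_irrational (t : ℝ) (ht : t ∈ Set.Ioo (0:ℝ) 1)
    (hirr : Irrational t) :
    volume (cornerC t) = 0 := by
  classical
  by_contra hV
  obtain ⟨u, l, hl, hI⟩ := C_interior ht hV
  obtain ⟨m, i0, i1, hC⟩ := exists_Cfg ht hV
  choose n g ginj gP gb gc g1 gK using hC
  let x : ℕ → Fin m → ℝ := fun k i => pp t (g k i) - pp t (g k i0)
  have hcomp : IsCompact (Set.univ.pi (fun _ : Fin m => Set.Icc (-12:ℝ) 10)) :=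
    isCompact_univ_pi (fun _ => isCompact_Icc)
  obtain ⟨y, -, φ, hφ, hy⟩ := hcomp.tendsto_subseq (x := x) (fun k i _ => gb k i)
  have hyi := fun i => tendsto_pi_nhds.1 hy i
  let G := {i : Fin m // ∃ z, z - y i ∈ cornerC t ∧ -10 < z ∧ z < 10}
  -- intervals
  have hint : ∀ i : G, ∃ α ℓ, 0 < ℓ ∧ -10 < α ∧ α + ℓ < 10 ∧
      ∀ z, α ≤ z → z ≤ α + ℓ → z - y i ∈ cornerC t := by
    rintro ⟨i, z0, hz0, hz1, hz2⟩
    obtain ⟨k, c, h⟩ := C_copy ht hz0 (ρ := min (z0+10) (10-z0)) (by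
      apply lt_min <;> linarith)
    have h4 : (0:ℝ) < 4^k := by positivity
    have hl' : 0 < l / 4^k := by positivity
    have hu1 := (h u (hI u le_rfl (by linarith))).2
    have hu2 := (h (u+l) (hI _ (by linarith) le_rfl)).2
    rw [lt_min_iff, abs_lt, abs_lt] at hu1 hu2
    refine ⟨(u + c)/4^k + y i, l/4^k, hl', by linarith [hu1.1.1], ?_, ?_⟩
    · have : (u+l+c)/4^k = (u+c)/4^k + l/4^k := by ring
      linarith [hu2.2.2]
    · intro z h1 h2
      have e1 : (u+c)/4^k ≤ z - y i := by linarith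
      have e2 : z - y i ≤ (u+c+l)/4^k := by
        have : (u+c+l)/4^k = (u+c)/4^k + l/4^k := by ring
        linarith
      rw [div_le_iff₀ h4] at e1
      rw [le_div_iff₀ h4] at e2
      have := (h ((z - y i)*4^k - c) (hI _ (by linarith) (by linarith))).1
      simpa [h4.ne'] using this
  choose α ℓ hℓ hα1 hα2 hα3 using hint
  have hη : ∀ᶠ η in 𝓝[>] (0:ℝ), ∀ i : G, 3*η ≤ α i + 10 ∧ 4*η ≤ ℓ i ∧ 13*η ≤ 10 - α i := by
    rw [eventually_all]
    intro i
    have hpos : 0 < min (α i + 10) (min (ℓ i) (10 - α i)) / 13 := by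
      apply div_pos _ (by norm_num)
      refine lt_min (by linarith [hα1 i]) (lt_min (hℓ i) (by linarith [hα2 i, hℓ i]))
    filter_upwards [Ioo_mem_nhdsGT hpos] with η hη
    have h0 := hη.1
    have h1 : 13 * η < min (α i + 10) (min (ℓ i) (10 - α i)) := by
      have := hη.2
      rw [lt_div_iff₀ (by norm_num)] at this
      linarith
    rw [lt_min_iff, lt_min_iff] at h1
    refine ⟨?_, ?_, ?_⟩ <;> linarith
  obtain ⟨η, hη, hη0⟩ := (hη.and self_mem_nhdsWithin).exists
  replace hη0 : 0 < η := hη0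
  have hclose : ∀ᶠ k in atTop, ∀ i, |x (φ k) i - y i| < η := by
    rw [eventually_all]
    intro i
    have := (Metric.tendsto_nhds.1 (hyi i)) η hη0
    simpa [Real.dist_eq] using this
  obtain ⟨k0, hk0⟩ := eventually_atTop.1 hclose
  -- facts about close configurations
  have hcov : ∀ k ≥ k0, ∀ z, -10 + 2*η ≤ z → z ≤ 10 - 2*η →
      ∃ i : G, z - x (φ k) i ∈ cornerC t := by
    intro k hk z h1 h2
    obtain ⟨i, hi⟩ := gc (φ k) z (by linarith) (by linarith)
    change z - x (φ k) i ∈ cornerC t at hi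
    have := abs_lt.1 (hk0 k hk i)
    refine ⟨⟨i, z - x (φ k) i + y i, by simpa using hi, by linarith, by linarith⟩, hi⟩
  have hnull : ∀ k, ∀ i j : G, i ≠ j →
      volume {z | z - x k i ∈ cornerC t ∧ z - x k j ∈ cornerC t} = 0 := by
    intro k i j hij
    have h := C_null ht (n k) (gP k i) (gP k j) (fun h => hij (Subtype.ext (ginj k h)))
    rw [← measure_preimage_add_right volume (pp t (g k i0))] at h
    refine measure_mono_null ?_ h
    rintro z ⟨hz1, hz2⟩
    refine ⟨?_, ?_⟩
    · convert hz1 using 1; simp only [x]; ring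
    · convert hz2 using 1; simp only [x]; ring
  have hiv : ∀ k ≥ k0, ∀ i : G, ∃ a, -10 + 2*η ≤ a ∧ a + 5*(2*η) ≤ 10 - 2*η ∧
      ∀ z, a ≤ z → z ≤ a + 2*(2*η) → z - x (φ k) i ∈ cornerC t := by
    intro k hk i
    have h := abs_lt.1 (hk0 k hk i)
    obtain ⟨c1, c2, c3⟩ := hη i
    refine ⟨α i + (x (φ k) i - y i), by linarith, by linarith, fun z h1 h2 => ?_⟩
    have := hα3 i (z - (x (φ k) i - y i)) (by linarith) (by linarith)
    convert this using 1; ring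
  have hi0 : y i0 = 0 := by
    refine tendsto_nhds_unique (hyi i0) ?_
    have : (fun k => (x ∘ φ) k i0) = fun _ => (0:ℝ) := by
      ext k; simp [x]
    rw [this]; exact tendsto_const_nhds
  have hi1 : y i1 ∈ Set.Icc (1:ℝ) 3 :=
    isClosed_Icc.mem_of_tendsto (hyi i1) (Eventually.of_forall fun k => g1 (φ k))
  have h0T := C_zero t
  let j0 : G := ⟨i0, 0, by simpa [hi0] using h0T, by norm_num, by norm_num⟩
  let j1 : G := ⟨i1, y i1, by simpa using h0T, by linarith [hi1.1], by linarith [hi1.2]⟩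
  -- choose second index with a large jump
  set A := g (φ k0) i1
  set B := g (φ k0) i0
  let M : ℕ := (|A.1 - B.1| + |A.2 - B.2| + 1).toNat
  let k1 := max k0 M
  have hk1 : M ≤ φ k1 := (le_max_right _ _).trans (hφ.id_le k1)
  have hs := slide (C_reg ht hV) (ι := G) (x := fun i => x (φ k0) i) (y := fun i => x (φ k1) i)
    (η := 2*η) (l := -10+2*η) (r := 10-2*η) (by linarith) (fun i => by
      have e1 := abs_lt.1 (hk0 k0 le_rfl i)
      have e2 := abs_lt.1 (hk0 k1 (le_max_left _ _) i)
      rw [abs_le]; constructor <;> linarith)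
    (hcov k0 le_rfl) (hcov k1 (le_max_left _ _)) (hnull _) (hnull _)
    (hiv k0 le_rfl) (hiv k1 (le_max_left _ _)) j1 j0
  simp only [x, j0, j1] at hs
  have hK := gK (φ k1)
  set A' := g (φ k1) i1
  set B' := g (φ k1) i0
  have heq : (((A'.1 - B'.1 : ℤ)):ℝ) + t * ((A'.2 - B'.2 : ℤ)) =
      ((A.1 - B.1 : ℤ)) + t * ((A.2 - B.2 : ℤ)) := by
    simp only [pp] at hs
    push_cast
    linarith
  obtain ⟨q1, q2⟩ := pp_inj hirr heq
  rw [q1, q2] at hK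
  have hM : |A.1 - B.1| + |A.2 - B.2| + 1 ≤ (M:ℤ) := Int.self_le_toNat _
  have p1 := abs_nonneg (A.1 - B.1)
  have p2 := abs_nonneg (A.2 - B.2)
  have hk1' : (M:ℤ) ≤ (φ k1 : ℕ) := by exact_mod_cast hk1
  rcases hK with h | h <;> linarith
end
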